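/- arXiv:1501.05388 — 2 statements merged into one kernel-verified Lean document; each statement's English description precedes it below -/
import Mathlib

section
/- Let p, q ≥ 1, let A_1,…,A_p, B_1,…,B_q be strictly positive and a_1,…,a_p, b_1,…,b_q be nonnegative reals, set W(x) = ∏_{i=1}^p Γ(A_i x + a_i) / ∏_{j=1}^q Γ(B_j x + b_j), P(u) = Σ_{i=1}^p e^{−a_i u/A_i}/(1 − e^{−u/A_i}) − Σ_{j=1}^q e^{−b_j u/B_j}/(1 − e^{−u/B_j}) for u > 0, and ρ = ∏_{i=1}^p A_i^{A_i} · ∏_{j=1}^q B_j^{−B_j}. Then W is logarithmically completely monotonic on (0,∞) if and only if Σ_{j=1}^q B_j = Σ_{i=1}^p A_i, ρ ≤ 1, and P(u) ≥ 0 for all u > 0. In the affirmative case −(log W)′(x) = ∫_0^∞ e^{−xu} P(u) du + log(1/ρ) for all x > 0. -/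
open MeasureTheory

/-- A function `f` is completely monotonic on `(0,∞)` if it is infinitely
differentiable there and `(-1)^n f^(n)(x) ≥ 0` for all `n ≥ 0` and `x > 0`. -/
def CompletelyMonotonicOn (f : ℝ → ℝ) : Prop :=
  (∀ x > (0 : ℝ), ContDiffAt ℝ (⊤ : ℕ∞) f x) ∧
    ∀ (n : ℕ), ∀ x > (0 : ℝ), 0 ≤ (-1 : ℝ) ^ n * iteratedDeriv n f x

/-- A positive function `f` on `(0,∞)` is logarithmically completely monotonic
if `-(log f)'` is completely monotonic on `(0,∞)`. -/
def LogCompletelyMonotonic (f : ℝ → ℝ) : Prop :=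
  (∀ x > (0 : ℝ), 0 < f x) ∧
    CompletelyMonotonicOn (fun x => -deriv (fun y => Real.log (f y)) x)

/-!
Binet's formula `ψ(z) = log z - ∫₀^∞ e^{-zu} (1 / (1 - e^{-u}) - 1 / u) du` for the digamma
function, rescaled for each factor of `W`, gives
`-(log W)'(x) = ∫₀^∞ e^{-xu} K(u) du + (∑ Bⱼ - ∑ Aᵢ) log x + log (1 / ρ)`, where `K` is `P` minus
its pole `(∑ Aᵢ - ∑ Bⱼ) / u` at the origin and is bounded. A completely monotonic function is
bounded near infinity, which forces the logarithm to vanish; the limit at infinity is then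
`log (1 / ρ)`, and Post–Widder inversion writes `K(u) = P(u)` as a limit of nonnegative multiples of
`(-1)^n` times the `n`-th derivative at `n / u`. Conversely, differentiation under the integral sign
shows that a Laplace transform of a nonnegative kernel is completely monotonic.

Binet's formula itself follows because its two sides have the same increment under `z ↦ z + 1`
(a Frullani integral) and the same asymptotics at infinity (log-convexity of `Γ`).
-/

open Filter Real Set Topology

section Laplace

variable {f g : ℝ → ℝ} {x : ℝ}

/-- The Laplace transform `x ↦ ∫₀^∞ e^{-xu} f(u) du` of a real function. -/
noncomputable def laplace (f : ℝ → ℝ) (x : ℝ) : ℝ :=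
  ∫ u in Ioi 0, exp (-x * u) * f u

/-- The functions whose Laplace integral converges absolutely at every `x > 0`. -/
def LaplaceConvergent (f : ℝ → ℝ) : Prop :=
  ∀ x > 0, IntegrableOn (fun u ↦ exp (-x * u) * f u) (Ioi 0)

lemma laplace_congr (h : ∀ u > 0, f u = g u) : laplace f = laplace g := by
  ext x
  exact setIntegral_congr_fun measurableSet_Ioi fun u hu ↦ by simp only [h u hu]

lemma laplace_nonneg (h : ∀ u > 0, 0 ≤ f u) (x : ℝ) : 0 ≤ laplace f x :=
  setIntegral_nonneg measurableSet_Ioi fun u hu ↦ mul_nonneg (exp_pos _).le (h u hu)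

lemma laplace_const_mul (c : ℝ) (f : ℝ → ℝ) (x : ℝ) :
    laplace (fun u ↦ c * f u) x = c * laplace f x := by
  simp only [laplace, mul_left_comm _ c, integral_const_mul]

lemma laplace_exp_mul (c : ℝ) (f : ℝ → ℝ) (x : ℝ) :
    laplace (fun u ↦ exp (-c * u) * f u) x = laplace f (x + c) := by
  simp only [laplace, ← mul_assoc, ← exp_add, neg_add, add_mul]

lemma laplace_comp_div {c : ℝ} (hc : 0 < c) (f : ℝ → ℝ) (x : ℝ) :
    laplace (fun u ↦ f (u / c)) x = c * laplace f (c * x) := by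
  have h := integral_comp_mul_left_Ioi (fun v ↦ exp (-(c * x) * v) * f v) 0 (inv_pos.2 hc)
  simp only [mul_zero, inv_inv, smul_eq_mul] at h
  rw [laplace, laplace, ← h]
  refine setIntegral_congr_fun measurableSet_Ioi fun u _ ↦ ?_
  field_simp

lemma abs_exp_mul_le_of_le (f : ℝ → ℝ) {y u : ℝ} (hu : 0 < u) (hxy : x ≤ y) :
    |exp (-y * u) * f u| ≤ |exp (-x * u) * f u| := by
  rw [abs_mul, abs_mul, abs_exp, abs_exp]
  gcongr

namespace LaplaceConvergent

lemma of_abs_le {M : ℝ} (hf : ContinuousOn f (Ioi 0)) (hM : ∀ u > 0, |f u| ≤ M) :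
    LaplaceConvergent f := fun _ hx ↦
  (integrableOn_exp_mul_Ioi (neg_neg_of_pos hx) 0).mul_bdd
    (hf.aestronglyMeasurable measurableSet_Ioi) <|
    ae_restrict_of_forall_mem measurableSet_Ioi hM

lemma const (c : ℝ) : LaplaceConvergent fun _ ↦ c :=
  of_abs_le continuousOn_const fun _ _ ↦ le_rfl

lemma add (hf : LaplaceConvergent f) (hg : LaplaceConvergent g) :
    LaplaceConvergent fun u ↦ f u + g u := fun x hx ↦
  ((hf x hx).add (hg x hx)).congr (ae_of_all _ fun _ ↦ (mul_add _ _ _).symm)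

lemma sub (hf : LaplaceConvergent f) (hg : LaplaceConvergent g) :
    LaplaceConvergent fun u ↦ f u - g u := fun x hx ↦
  ((hf x hx).sub (hg x hx)).congr (ae_of_all _ fun _ ↦ (mul_sub _ _ _).symm)

lemma const_mul (hf : LaplaceConvergent f) (c : ℝ) :
    LaplaceConvergent fun u ↦ c * f u := fun x hx ↦
  ((hf x hx).const_mul c).congr (ae_of_all _ fun _ ↦ mul_left_comm _ _ _)

lemma finsetSum {ι : Type*} {s : Finset ι} {f : ι → ℝ → ℝ}
    (hf : ∀ i ∈ s, LaplaceConvergent (f i)) : LaplaceConvergent fun u ↦ ∑ i ∈ s, f i u :=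
  fun x hx ↦ (integrable_finsetSum s fun i hi ↦ hf i hi x hx).congr
    (ae_of_all _ fun _ ↦ (Finset.mul_sum _ _ _).symm)

lemma id_mul (hf : LaplaceConvergent f) : LaplaceConvergent fun u ↦ u * f u := by
  intro x hx
  have hbound : ∀ u > 0, |u * exp (-(x / 2) * u)| ≤ 2 / x := by
    intro u hu
    rw [abs_of_pos (by positivity), le_div_iff₀' hx]
    have h := (mul_exp_neg_le_exp_neg_one (x / 2 * u)).trans (exp_le_one_iff.2 (by norm_num))
    rw [← neg_mul] at h
    linarith
  have h := (hf (x / 2) (half_pos hx)).bdd_mul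
    (by fun_prop) (ae_restrict_of_forall_mem measurableSet_Ioi hbound)
  refine h.congr (ae_of_all _ fun u ↦ ?_)
  have hexp : exp (-x * u) = exp (-(x / 2) * u) * exp (-(x / 2) * u) := by
    rw [← exp_add]; ring_nf
  simp only [hexp]
  ring

lemma pow_mul (hf : LaplaceConvergent f) (n : ℕ) : LaplaceConvergent fun u ↦ u ^ n * f u := by
  induction n with
  | zero => simpa only [pow_zero, one_mul] using hf
  | succ n ih => simpa only [pow_succ', mul_assoc] using ih.id_mul

lemma pow (n : ℕ) : LaplaceConvergent fun u ↦ u ^ n := by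
  simpa only [mul_one] using (const 1).pow_mul n

lemma aestronglyMeasurable (hf : LaplaceConvergent f) (x : ℝ) :
    AEStronglyMeasurable (fun u ↦ exp (-x * u) * f u) (volume.restrict (Ioi 0)) := by
  have h := (by fun_prop : AEStronglyMeasurable (fun u ↦ exp ((1 - x) * u))
    (volume.restrict (Ioi 0))).mul (hf 1 one_pos).aestronglyMeasurable
  refine h.congr (ae_of_all _ fun u ↦ ?_)
  simp only [Pi.mul_apply, ← mul_assoc, ← exp_add]
  ring_nf

end LaplaceConvergent

lemma laplace_add (hf : LaplaceConvergent f) (hg : LaplaceConvergent g) (hx : 0 < x) :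
    laplace (fun u ↦ f u + g u) x = laplace f x + laplace g x := by
  simpa only [laplace, mul_add] using integral_add (hf x hx) (hg x hx)

lemma laplace_sub (hf : LaplaceConvergent f) (hg : LaplaceConvergent g) (hx : 0 < x) :
    laplace (fun u ↦ f u - g u) x = laplace f x - laplace g x := by
  simpa only [laplace, mul_sub] using integral_sub (hf x hx) (hg x hx)

lemma laplace_finsetSum {ι : Type*} {s : Finset ι} {f : ι → ℝ → ℝ}
    (hf : ∀ i ∈ s, LaplaceConvergent (f i)) (hx : 0 < x) :
    laplace (fun u ↦ ∑ i ∈ s, f i u) x = ∑ i ∈ s, laplace (f i) x := by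
  simpa only [laplace, Finset.mul_sum] using integral_finsetSum s fun i hi ↦ hf i hi x hx

lemma abs_laplace_le (hg : LaplaceConvergent g) (h : ∀ u > 0, |f u| ≤ g u) (hx : 0 < x) :
    |laplace f x| ≤ laplace g x := by
  refine norm_integral_le_of_norm_le (f := fun u ↦ exp (-x * u) * f u) (hg x hx)
    (ae_restrict_of_forall_mem measurableSet_Ioi fun u hu ↦ ?_)
  rw [norm_mul, norm_eq_abs, abs_exp, norm_eq_abs]
  exact mul_le_mul_of_nonneg_left (h u hu) (exp_pos _).le

lemma laplace_pow (n : ℕ) (hx : 0 < x) :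
    laplace (fun u ↦ u ^ n) x = n.factorial / x ^ (n + 1) := by
  have h := integral_rpow_mul_exp_neg_mul_Ioi (a := n + 1) (by positivity) hx
  rw [Gamma_nat_eq_factorial, add_sub_cancel_right, ← Nat.cast_succ, rpow_natCast, one_div,
    inv_pow] at h
  simpa [laplace, mul_comm, div_eq_mul_inv] using h

lemma tendsto_laplace_atTop (hf : LaplaceConvergent f) :
    Tendsto (laplace f) atTop (𝓝 0) := by
  have h := tendsto_integral_filter_of_dominated_convergence (l := atTop)
    (F := fun x u ↦ exp (-x * u) * f u) (f := fun _ ↦ 0) (μ := volume.restrict (Ioi 0))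
    (fun u ↦ |exp (-1 * u) * f u|) (.of_forall hf.aestronglyMeasurable) ?_ (hf 1 one_pos).abs ?_
  · rwa [integral_zero] at h
  · filter_upwards [eventually_ge_atTop 1] with x hx
    exact ae_restrict_of_forall_mem measurableSet_Ioi fun u hu ↦ abs_exp_mul_le_of_le f hu hx
  · refine ae_restrict_of_forall_mem measurableSet_Ioi fun u hu ↦ ?_
    have hexp : Tendsto (fun x ↦ exp (-x * u)) atTop (𝓝 0) := by
      simpa only [neg_mul, Function.comp_def, id_eq] using
        tendsto_exp_neg_atTop_nhds_zero.comp (tendsto_id.atTop_mul_const (mem_Ioi.1 hu))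
    simpa only [zero_mul] using hexp.mul_const (f u)

lemma hasDerivAt_laplace (hf : LaplaceConvergent f) (hx : 0 < x) :
    HasDerivAt (laplace f) (-laplace (fun u ↦ u * f u) x) x := by
  rw [laplace, ← integral_neg]
  refine (hasDerivAt_integral_of_dominated_loc_of_deriv_le (μ := volume.restrict (Ioi 0))
    (F := fun x u ↦ exp (-x * u) * f u) (F' := fun x u ↦ -(exp (-x * u) * (u * f u)))
    (bound := fun u ↦ |exp (-(x / 2) * u) * (u * f u)|)
    (Ioi_mem_nhds (half_lt_self hx)) (.of_forall hf.aestronglyMeasurable) (hf x hx)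
    (hf.id_mul.aestronglyMeasurable x).neg ?_ (hf.id_mul _ (half_pos hx)).abs ?_).2
  · refine ae_restrict_of_forall_mem measurableSet_Ioi fun u hu y hy ↦ ?_
    rw [norm_neg]
    exact abs_exp_mul_le_of_le (fun u ↦ u * f u) hu (mem_Ioi.1 hy).le
  · refine ae_of_all _ fun u y _ ↦ ?_
    have hexp : HasDerivAt (fun y ↦ exp (-y * u)) (exp (-y * u) * (-1 * u)) y :=
      ((hasDerivAt_id y).neg.mul_const u).exp
    exact (hexp.mul_const (f u)).congr_deriv (by ring)

lemma contDiffOn_laplace (hf : LaplaceConvergent f) (n : ℕ) :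
    ContDiffOn ℝ n (laplace f) (Ioi 0) := by
  induction n generalizing f with
  | zero =>
    exact contDiffOn_zero.2 fun x hx ↦
      (hasDerivAt_laplace hf hx).continuousAt.continuousWithinAt
  | succ n ih =>
    rw [Nat.cast_succ, contDiffOn_succ_iff_deriv_of_isOpen isOpen_Ioi]
    exact ⟨fun x hx ↦ (hasDerivAt_laplace hf hx).differentiableAt.differentiableWithinAt,
      by simp, (ih hf.id_mul).neg.congr fun x hx ↦ (hasDerivAt_laplace hf hx).deriv⟩

lemma contDiffAt_laplace (hf : LaplaceConvergent f) (hx : 0 < x) :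
    ContDiffAt ℝ (⊤ : ℕ∞) (laplace f) x :=
  contDiffAt_infty.2 fun n ↦ (contDiffOn_laplace hf n).contDiffAt (Ioi_mem_nhds hx)

lemma iteratedDeriv_laplace (hf : LaplaceConvergent f) (n : ℕ) (hx : 0 < x) :
    iteratedDeriv n (laplace f) x = (-1) ^ n * laplace (fun u ↦ u ^ n * f u) x := by
  induction n generalizing x with
  | zero => simp only [iteratedDeriv_zero, pow_zero, one_mul]
  | succ n ih =>
    have heq : iteratedDeriv n (laplace f) =ᶠ[𝓝 x]
        fun y ↦ (-1) ^ n * laplace (fun u ↦ u ^ n * f u) y := by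
      filter_upwards [Ioi_mem_nhds hx] with y hy using ih hy
    rw [iteratedDeriv_succ, heq.deriv_eq,
      ((hasDerivAt_laplace (hf.pow_mul n) hx).const_mul _).deriv]
    simp only [pow_succ, ← mul_assoc, mul_comm]
    ring

end Laplace

section PostInversion

variable {f g : ℝ → ℝ} {M t : ℝ}

/-- The Post–Widder inversion operator: the average of `f` against the Gamma density of shape
`n + 1` and rate `n / t`, which recovers `f t` from the derivatives of `laplace f` as `n → ∞`. -/
noncomputable def postWidder (n : ℕ) (f : ℝ → ℝ) (t : ℝ) : ℝ :=
  (n / t) ^ (n + 1) / n.factorial * laplace (fun u ↦ u ^ n * f u) (n / t)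

lemma postWidder_add (hf : LaplaceConvergent f) (hg : LaplaceConvergent g) {n : ℕ} (hn : n ≠ 0)
    (ht : 0 < t) :
    postWidder n (fun u ↦ f u + g u) t = postWidder n f t + postWidder n g t := by
  simp only [postWidder, mul_add, laplace_add (hf.pow_mul n) (hg.pow_mul n)
    (show (0 : ℝ) < n / t by positivity)]

lemma postWidder_const_mul (n : ℕ) (c : ℝ) (f : ℝ → ℝ) (t : ℝ) :
    postWidder n (fun u ↦ c * f u) t = c * postWidder n f t := by
  simp only [postWidder, mul_left_comm _ c, laplace_const_mul]

lemma abs_postWidder_le (hg : LaplaceConvergent g) (h : ∀ u > 0, |f u| ≤ g u) {n : ℕ}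
    (hn : n ≠ 0) (ht : 0 < t) : |postWidder n f t| ≤ postWidder n g t := by
  have hpow : ∀ u > 0, |u ^ n * f u| ≤ u ^ n * g u := fun u hu ↦ by
    rw [abs_mul, abs_of_pos (pow_pos hu n)]
    exact mul_le_mul_of_nonneg_left (h u hu) (by positivity)
  rw [postWidder, abs_mul, abs_of_pos (by positivity)]
  exact mul_le_mul_of_nonneg_left (abs_laplace_le (hg.pow_mul n) hpow (by positivity))
    (by positivity)

lemma postWidder_pow (k : ℕ) {n : ℕ} (hn : n ≠ 0) (ht : 0 < t) :
    postWidder n (fun u ↦ u ^ k) t = (n + 1).ascFactorial k * (t / n) ^ k := by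
  have hx : (0 : ℝ) < n / t := by positivity
  simp only [postWidder, ← pow_add]
  rw [laplace_pow _ hx, ← Nat.factorial_mul_ascFactorial, ← inv_div (n : ℝ) t, inv_pow,
    Nat.cast_mul]
  generalize (n : ℝ) / t = x at hx ⊢
  field_simp
  ring

lemma postWidder_const {n : ℕ} (hn : n ≠ 0) (ht : 0 < t) (c : ℝ) :
    postWidder n (fun _ ↦ c) t = c := by
  simpa using (postWidder_const_mul n c (fun u ↦ u ^ 0) t).trans
    (congrArg (c * ·) (postWidder_pow 0 hn ht))

lemma sub_sq_eq_add_add (t : ℝ) :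
    (fun u : ℝ ↦ (u - t) ^ 2) = fun u ↦ u ^ 2 + ((-2 * t) * u ^ 1 + t ^ 2) := by
  ext u; ring

lemma laplaceConvergent_sub_sq (t : ℝ) : LaplaceConvergent fun u ↦ (u - t) ^ 2 := by
  rw [sub_sq_eq_add_add]
  exact (LaplaceConvergent.pow 2).add (((LaplaceConvergent.pow 1).const_mul _).add (.const _))

lemma postWidder_sub_sq {n : ℕ} (hn : n ≠ 0) (ht : 0 < t) :
    postWidder n (fun u ↦ (u - t) ^ 2) t = t ^ 2 * ((n + 2) / n ^ 2) := by
  have h1 := (LaplaceConvergent.pow 1).const_mul (-2 * t)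
  have h0 := LaplaceConvergent.const (t ^ 2)
  rw [sub_sq_eq_add_add, postWidder_add (.pow 2) (h1.add h0) hn ht, postWidder_add h1 h0 hn ht,
    postWidder_const_mul, postWidder_const hn ht, postWidder_pow 1 hn ht, postWidder_pow 2 hn ht]
  simp only [Nat.ascFactorial]
  push_cast
  field_simp
  ring

lemma exists_abs_sub_le_add_mul_sq (hM : ∀ u > 0, |f u| ≤ M) (ht : 0 < t)
    (hc : ContinuousAt f t) {ε : ℝ} (hε : 0 < ε) :
    ∃ C, ∀ u > 0, |f u - f t| ≤ ε + C * (u - t) ^ 2 := by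
  obtain ⟨δ, hδ, hnear⟩ := Metric.continuousAt_iff.1 hc ε hε
  simp only [Real.dist_eq] at hnear
  have hM0 : 0 ≤ M := (abs_nonneg _).trans (hM t ht)
  refine ⟨2 * M / δ ^ 2, fun u hu ↦ ?_⟩
  rcases lt_or_ge |u - t| δ with h | h
  · exact (hnear h).le.trans (le_add_of_nonneg_right (by positivity))
  · have hfar : 1 ≤ (u - t) ^ 2 / δ ^ 2 := by
      rw [one_le_div₀ (by positivity), ← sq_abs (u - t)]
      gcongr
    calc |f u - f t| ≤ |f u| + |f t| := abs_sub _ _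
      _ ≤ 2 * M * 1 := by linarith [hM u hu, hM t ht]
      _ ≤ 2 * M * ((u - t) ^ 2 / δ ^ 2) := by gcongr
      _ ≤ ε + 2 * M / δ ^ 2 * (u - t) ^ 2 := by
        rw [mul_div_assoc', div_mul_eq_mul_div]
        exact le_add_of_nonneg_left hε.le

lemma abs_postWidder_sub_le (hf : LaplaceConvergent f) (ht : 0 < t) {ε C : ℝ}
    (hC : ∀ u > 0, |f u - f t| ≤ ε + C * (u - t) ^ 2) {n : ℕ} (hn : n ≠ 0) :
    |postWidder n f t - f t| ≤ ε + C * (t ^ 2 * ((n + 2) / n ^ 2)) := by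
  have hsq := (laplaceConvergent_sub_sq t).const_mul C
  calc |postWidder n f t - f t| = |postWidder n (fun u ↦ f u + -f t) t| := by
        rw [postWidder_add hf (.const _) hn ht, postWidder_const hn ht, sub_eq_add_neg]
    _ ≤ postWidder n (fun u ↦ ε + C * (u - t) ^ 2) t :=
        abs_postWidder_le ((LaplaceConvergent.const ε).add hsq) hC hn ht
    _ = ε + C * (t ^ 2 * ((n + 2) / n ^ 2)) := by
        rw [postWidder_add (.const ε) hsq hn ht, postWidder_const hn ht, postWidder_const_mul,
          postWidder_sub_sq hn ht]

lemma tendsto_add_two_div_sq_atTop :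
    Tendsto (fun n : ℕ ↦ ((n : ℝ) + 2) / n ^ 2) atTop (𝓝 0) := by
  have hinv : Tendsto (fun n : ℕ ↦ (n : ℝ)⁻¹) atTop (𝓝 0) := tendsto_inv_atTop_nhds_zero_nat
  have h := hinv.add ((hinv.pow 2).const_mul 2)
  norm_num only at h
  refine h.congr' ?_
  filter_upwards [eventually_ne_atTop 0] with n hn
  field_simp

theorem tendsto_postWidder (hf : LaplaceConvergent f) (hM : ∀ u > 0, |f u| ≤ M) (ht : 0 < t)
    (hc : ContinuousAt f t) : Tendsto (fun n ↦ postWidder n f t) atTop (𝓝 (f t)) := by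
  refine Metric.tendsto_nhds.2 fun ε hε ↦ ?_
  obtain ⟨C, hC⟩ := exists_abs_sub_le_add_mul_sq hM ht hc (half_pos hε)
  have hlim : Tendsto (fun n : ℕ ↦ ε / 2 + C * (t ^ 2 * (((n : ℝ) + 2) / n ^ 2))) atTop
      (𝓝 (ε / 2)) := by
    simpa only [mul_zero, add_zero] using
      ((tendsto_add_two_div_sq_atTop.const_mul (t ^ 2)).const_mul C).const_add (ε / 2)
  filter_upwards [hlim.eventually_lt_const (half_lt_self hε), eventually_ne_atTop 0] with n hlt hn
  exact (abs_postWidder_sub_le hf ht hC hn).trans_lt hlt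

end PostInversion

section CompletelyMonotonic

variable {f g : ℝ → ℝ} {c s : ℝ}

lemma completelyMonotonicOn_congr (h : ∀ x > 0, f x = g x) :
    CompletelyMonotonicOn f ↔ CompletelyMonotonicOn g := by
  have heq : ∀ x > 0, f =ᶠ[𝓝 x] g := fun x hx ↦ by
    filter_upwards [Ioi_mem_nhds hx] with y hy using h y hy
  refine and_congr (forall₂_congr fun x hx ↦ ⟨fun hf ↦ hf.congr_of_eventuallyEq (heq x hx).symm,
    fun hg ↦ hg.congr_of_eventuallyEq (heq x hx)⟩)
    (forall₃_congr fun n x hx ↦ ?_)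
  rw [(heq x hx).iteratedDeriv_eq n]

namespace CompletelyMonotonicOn

lemma nonneg (hf : CompletelyMonotonicOn f) {x : ℝ} (hx : 0 < x) : 0 ≤ f x := by
  simpa only [pow_zero, one_mul, iteratedDeriv_zero] using hf.2 0 x hx

lemma antitoneOn (hf : CompletelyMonotonicOn f) : AntitoneOn f (Ioi 0) := by
  have hdiff : ∀ x > 0, DifferentiableAt ℝ f x := fun x hx ↦
    (hf.1 x hx).differentiableAt (by simp)
  refine antitoneOn_of_deriv_nonpos (convex_Ioi 0)
    (fun x hx ↦ (hdiff x hx).continuousAt.continuousWithinAt)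
    (fun x hx ↦ (hdiff x (interior_subset hx)).differentiableWithinAt) fun x hx ↦ ?_
  simpa only [pow_one, neg_one_mul, iteratedDeriv_one, Left.nonneg_neg_iff] using
    hf.2 1 x (interior_subset hx)

lemma isBigO_one (hf : CompletelyMonotonicOn f) : f =O[atTop] fun _ ↦ (1 : ℝ) := by
  refine Asymptotics.IsBigO.of_bound (f 1) ?_
  filter_upwards [eventually_ge_atTop 1] with x hx
  have hx0 : 0 < x := one_pos.trans_le hx
  rw [norm_of_nonneg (hf.nonneg hx0), norm_one, mul_one]
  exact hf.antitoneOn (mem_Ioi.2 one_pos) hx0 hx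

end CompletelyMonotonicOn

lemma eq_zero_of_mul_log_isBigO_one (h : (fun x ↦ s * log x) =O[atTop] fun _ ↦ (1 : ℝ)) :
    s = 0 := by
  by_contra hs
  have hlog : log =o[atTop] log :=
    (Asymptotics.isLittleO_const_mul_left_iff hs).1 (h.trans_isLittleO isLittleO_const_log_atTop)
  refine Asymptotics.isLittleO_irrefl ?_ hlog
  exact ((tendsto_log_atTop.eventually_gt_atTop 0).mono fun x hx ↦ hx.ne').frequently

lemma iteratedDeriv_laplace_add_const (hf : LaplaceConvergent f) (c : ℝ) (n : ℕ) {x : ℝ}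
    (hx : 0 < x) :
    iteratedDeriv n (fun x ↦ laplace f x + c) x =
      (-1) ^ n * laplace (fun u ↦ u ^ n * f u) x + if n = 0 then c else 0 := by
  rw [iteratedDeriv_fun_add ((contDiffAt_laplace hf hx).of_le (by exact_mod_cast le_top))
    contDiffAt_const, iteratedDeriv_laplace hf n hx, iteratedDeriv_const]

theorem completelyMonotonicOn_laplace_add_const (hf : LaplaceConvergent f)
    (hf0 : ∀ u > 0, 0 ≤ f u) (hc : 0 ≤ c) : CompletelyMonotonicOn fun x ↦ laplace f x + c := by
  refine ⟨fun x hx ↦ (contDiffAt_laplace hf hx).add contDiffAt_const, fun n x hx ↦ ?_⟩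
  have h := laplace_nonneg (f := fun u ↦ u ^ n * f u)
    (fun u hu ↦ mul_nonneg (pow_pos hu n).le (hf0 u hu)) x
  rw [iteratedDeriv_laplace_add_const hf c n hx, mul_add, ← mul_assoc, ← mul_pow]
  refine add_nonneg (by simpa using h) ?_
  split_ifs with hn <;> simp [hn, hc]

theorem CompletelyMonotonicOn.nonneg_of_laplace_add_const {M : ℝ}
    (h : CompletelyMonotonicOn fun x ↦ laplace f x + c) (hf : LaplaceConvergent f)
    (hcont : ContinuousOn f (Ioi 0)) (hM : ∀ u > 0, |f u| ≤ M) {u : ℝ} (hu : 0 < u) :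
    0 ≤ f u := by
  refine ge_of_tendsto
    (tendsto_postWidder hf hM hu (hcont.continuousAt (Ioi_mem_nhds hu))) ?_
  filter_upwards [eventually_ne_atTop 0] with n hn
  have hx : 0 < n / u := by positivity
  have hn' := h.2 n (n / u) hx
  rw [iteratedDeriv_laplace_add_const hf c n hx, if_neg hn, add_zero, ← mul_assoc, ← mul_pow,
    neg_one_mul, neg_neg, one_pow, one_mul] at hn'
  exact mul_nonneg (by positivity) hn'

theorem completelyMonotonicOn_laplace_add_log_add_const_iff {M : ℝ}
    (hcont : ContinuousOn f (Ioi 0)) (hM : ∀ u > 0, |f u| ≤ M) :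
    CompletelyMonotonicOn (fun x ↦ laplace f x + s * log x + c) ↔
      s = 0 ∧ 0 ≤ c ∧ ∀ u > 0, 0 ≤ f u := by
  have hf : LaplaceConvergent f := .of_abs_le hcont hM
  refine ⟨fun h ↦ ?_, ?_⟩
  · have hlap := (tendsto_laplace_atTop hf).isBigO_one ℝ
    have hlog : (fun x ↦ s * log x) =O[atTop] fun _ ↦ (1 : ℝ) :=
      ((h.isBigO_one.sub hlap).sub (Asymptotics.isBigO_const_const c one_ne_zero _)).congr_left
        fun x ↦ by ring
    obtain rfl := eq_zero_of_mul_log_isBigO_one hlog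
    simp only [zero_mul, add_zero] at h
    have hlim : Tendsto (fun x ↦ laplace f x + c) atTop (𝓝 c) := by
      simpa only [zero_add] using (tendsto_laplace_atTop hf).add_const c
    exact ⟨rfl, ge_of_tendsto hlim ((eventually_gt_atTop 0).mono fun x ↦ h.nonneg),
      fun u ↦ h.nonneg_of_laplace_add_const hf hcont hM⟩
  · rintro ⟨rfl, hc, hf0⟩
    simpa only [zero_mul, add_zero] using completelyMonotonicOn_laplace_add_const hf hf0 hc

end CompletelyMonotonic

section Digamma

variable {c x z : ℝ}

lemma differentiableAt_Gamma_of_pos (hz : 0 < z) : DifferentiableAt ℝ Gamma z :=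
  differentiableOn_Gamma_Ioi.differentiableAt (Ioi_mem_nhds hz)

lemma hasDerivAt_log_Gamma (hz : 0 < z) : HasDerivAt (log ∘ Gamma) (logDeriv Gamma z) z :=
  (differentiableAt_Gamma_of_pos hz).hasDerivAt.log (Gamma_pos_of_pos hz).ne'

lemma logDeriv_Gamma_add_one (hz : 0 < z) :
    logDeriv Gamma (z + 1) = logDeriv Gamma z + 1 / z := by
  have hrec : (fun y ↦ Gamma (y + 1)) =ᶠ[𝓝 z] fun y ↦ y * Gamma y := by
    filter_upwards [Ioi_mem_nhds hz] with y hy using Gamma_add_one (ne_of_gt hy)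
  calc logDeriv Gamma (z + 1) = logDeriv (fun y ↦ Gamma (y + 1)) z := by
        rw [logDeriv_apply, logDeriv_apply, deriv_comp_add_const]
    _ = logDeriv (fun y ↦ y * Gamma y) z := (logDeriv_congr_nhds hrec).eq_of_nhds
    _ = logDeriv Gamma z + 1 / z := by
        rw [logDeriv_mul z hz.ne' (Gamma_pos_of_pos hz).ne' differentiableAt_fun_id
          (differentiableAt_Gamma_of_pos hz), logDeriv_id', add_comm]

lemma slope_log_Gamma (hz : 0 < z) : slope (log ∘ Gamma) z (z + 1) = log z := by
  simp only [slope_def_field, Function.comp_apply, Gamma_add_one hz.ne', add_sub_cancel_left,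
    log_mul hz.ne' (Gamma_pos_of_pos hz).ne', add_sub_cancel_right, div_one]

lemma logDeriv_Gamma_le_log (hz : 0 < z) : logDeriv Gamma z ≤ log z := by
  rw [← slope_log_Gamma hz]
  exact convexOn_log_Gamma.le_slope_of_hasDerivAt hz (hz.trans (lt_add_one z)) (lt_add_one z)
    (hasDerivAt_log_Gamma hz)

lemma log_sub_inv_le_logDeriv_Gamma (hz : 0 < z) : log z - 1 / z ≤ logDeriv Gamma z := by
  have hz1 : 0 < z + 1 := hz.trans (lt_add_one z)
  rw [sub_le_iff_le_add, ← logDeriv_Gamma_add_one hz, ← slope_log_Gamma hz]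
  exact convexOn_log_Gamma.slope_le_of_hasDerivAt hz hz1 (lt_add_one z) (hasDerivAt_log_Gamma hz1)

lemma tendsto_logDeriv_Gamma_sub_log :
    Tendsto (fun z ↦ logDeriv Gamma z - log z) atTop (𝓝 0) := by
  refine tendsto_of_tendsto_of_tendsto_of_le_of_le' (g := fun z : ℝ ↦ -z⁻¹) (h := fun _ ↦ 0)
    (by simpa using (tendsto_inv_atTop_zero (𝕜 := ℝ)).neg) tendsto_const_nhds ?_ ?_ <;>
    filter_upwards [eventually_gt_atTop 0] with z hz
  · linarith [log_sub_inv_le_logDeriv_Gamma hz, one_div z]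
  · linarith [logDeriv_Gamma_le_log hz]

lemma one_sub_exp_neg_pos {u : ℝ} (hu : 0 < u) : 0 < 1 - exp (-u) :=
  sub_pos.2 (exp_lt_one_iff.2 (neg_neg_of_pos hu))

lemma abs_one_sub_exp_div_le (hc : 0 ≤ c) {u : ℝ} (hu : 0 < u) :
    |(1 - exp (-c * u)) / u| ≤ c := by
  have hle : exp (-c * u) ≤ 1 := exp_le_one_iff.2 (by nlinarith)
  rw [abs_of_nonneg (div_nonneg (sub_nonneg.2 hle) hu.le), div_le_iff₀ hu]
  linarith [add_one_le_exp (-c * u)]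

lemma laplaceConvergent_one_sub_exp_div (hc : 0 ≤ c) :
    LaplaceConvergent fun u ↦ (1 - exp (-c * u)) / u :=
  .of_abs_le (ContinuousOn.div (by fun_prop) (by fun_prop) fun _ hu ↦ ne_of_gt hu)
    fun _ ↦ abs_one_sub_exp_div_le hc

lemma laplace_one_sub_exp_div (hc : 0 ≤ c) (hx : 0 < x) :
    laplace (fun u ↦ (1 - exp (-c * u)) / u) x = log ((x + c) / x) := by
  have hlim : Tendsto (fun t ↦ exp (-t)) (𝓝[>] 0) (𝓝 1) :=
    ((by fun_prop : Continuous fun t : ℝ ↦ exp (-t)).tendsto' 0 1 (by simp)).mono_left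
      nhdsWithin_le_nhds
  have hintegrand : (fun u ↦ exp (-x * u) * ((1 - exp (-c * u)) / u)) =
      fun u ↦ u⁻¹ • (exp (-(x * u)) - exp (-((x + c) * u))) := by
    ext u
    rw [neg_mul, neg_mul, add_mul, neg_add, exp_add, smul_eq_mul]
    ring
  have hint := laplaceConvergent_one_sub_exp_div hc x hx
  rw [hintegrand] at hint
  rw [laplace, hintegrand, Frullani.integral_Ioi_eq (f := fun t ↦ exp (-t)) (L := 1) (R := 0)
    ((by fun_prop : Continuous fun t : ℝ ↦ exp (-t)).locallyIntegrable.locallyIntegrableOn _)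
    hx (by positivity) hlim tendsto_exp_neg_atTop_nhds_zero hint, sub_zero, smul_eq_mul, mul_one]

/-- The kernel of Binet's integral `ψ(z) = log z - ∫₀^∞ e^{-zu} (1 / (1 - e^{-u}) - 1 / u) du`
for the digamma function `ψ = Γ' / Γ`. -/
noncomputable def binetKernel (u : ℝ) : ℝ := 1 / (1 - exp (-u)) - 1 / u

lemma continuousOn_binetKernel : ContinuousOn binetKernel (Ioi 0) :=
  (ContinuousOn.div (by fun_prop) (by fun_prop) fun _ hu ↦ (one_sub_exp_neg_pos hu).ne').sub
    (ContinuousOn.div (by fun_prop) (by fun_prop) fun _ hu ↦ ne_of_gt hu)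

lemma abs_binetKernel_le_one {u : ℝ} (hu : 0 < u) : |binetKernel u| ≤ 1 := by
  have hpos := one_sub_exp_neg_pos hu
  have hlower : 1 / u ≤ 1 / (1 - exp (-u)) :=
    one_div_le_one_div_of_le hpos (by linarith [one_sub_le_exp_neg u])
  have hupper : 1 / (1 - exp (-u)) ≤ 1 / u + 1 := by
    have hexp : (u + 1) * exp (-u) ≤ 1 := by
      rw [exp_neg, ← div_eq_mul_inv, div_le_one (exp_pos u)]
      exact add_one_le_exp u
    rw [div_add_one hu.ne', div_le_div_iff₀ hpos hu]
    linarith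
  rw [binetKernel, abs_of_nonneg (sub_nonneg.2 hlower)]
  linarith

lemma laplaceConvergent_binetKernel : LaplaceConvergent binetKernel :=
  .of_abs_le continuousOn_binetKernel fun _ ↦ abs_binetKernel_le_one

lemma laplace_binetKernel_add_one (hz : 0 < z) :
    laplace binetKernel (z + 1) = laplace binetKernel z + (log (z + 1) - log z - 1 / z) := by
  have hfru := laplaceConvergent_one_sub_exp_div zero_le_one
  have hone : laplace (fun _ ↦ 1) z = 1 / z := by simpa using laplace_pow 0 hz
  have hkernel : ∀ u > 0, exp (-1 * u) * binetKernel u =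
      binetKernel u + ((1 - exp (-1 * u)) / u - 1) := by
    intro u hu
    have hne := (one_sub_exp_neg_pos hu).ne'
    rw [binetKernel, neg_one_mul]
    field_simp
    ring
  rw [← laplace_exp_mul, laplace_congr hkernel,
    laplace_add laplaceConvergent_binetKernel (hfru.sub (.const 1)) hz,
    laplace_sub hfru (.const 1) hz, laplace_one_sub_exp_div zero_le_one hz, hone,
    log_div (by positivity) hz.ne']

lemma eq_of_forall_add_one_eq_of_tendsto {h : ℝ → ℝ} {l : ℝ}
    (hper : ∀ z > 0, h (z + 1) = h z) (hlim : Tendsto h atTop (𝓝 l)) (hz : 0 < z) : h z = l := by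
  have hnat (n : ℕ) : h (z + n) = h z := by
    induction n with
    | zero => rw [Nat.cast_zero, add_zero]
    | succ n ih => rw [Nat.cast_succ, ← add_assoc, hper _ (by positivity), ih]
  refine tendsto_nhds_unique (tendsto_const_nhds.congr fun n ↦ (hnat n).symm)
    (hlim.comp (tendsto_atTop_add_const_left atTop z tendsto_natCast_atTop_atTop))

theorem logDeriv_Gamma_eq_log_sub_laplace (hz : 0 < z) :
    logDeriv Gamma z = log z - laplace binetKernel z := by
  have h := eq_of_forall_add_one_eq_of_tendsto
    (h := fun z ↦ logDeriv Gamma z - log z + laplace binetKernel z) (l := 0) (fun z hz ↦ by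
      rw [logDeriv_Gamma_add_one hz, laplace_binetKernel_add_one hz]; ring)
    (by simpa only [add_zero] using
      tendsto_logDeriv_Gamma_sub_log.add (tendsto_laplace_atTop laplaceConvergent_binetKernel)) hz
  linarith

end Digamma

section GammaRatio

/-- The kernel `∑_{k ≥ 0} e^{-(a + k) u / A}` attached to the factor `Γ(A x + a)`, minus its pole
`A / u` at the origin; subtracting the pole makes it bounded. -/
noncomputable def gammaKernel (A a u : ℝ) : ℝ :=
  exp (-a * u / A) / (1 - exp (-u / A)) - A / u

section Kernel

variable {A a x : ℝ}

lemma mul_add_pos (hA : 0 < A) (ha : 0 ≤ a) (hx : 0 < x) : 0 < A * x + a := by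
  positivity

lemma hasDerivAt_Gamma_mul_add (h : 0 < A * x + a) :
    HasDerivAt (fun x ↦ Gamma (A * x + a)) (deriv Gamma (A * x + a) * A) x :=
  (differentiableAt_Gamma_of_pos h).hasDerivAt.comp (h := fun x ↦ A * x + a) x
    ((hasDerivAt_const_mul A).add_const a)

lemma logDeriv_Gamma_mul_add (h : 0 < A * x + a) :
    logDeriv (fun x ↦ Gamma (A * x + a)) x = A * logDeriv Gamma (A * x + a) := by
  rw [logDeriv_apply, logDeriv_apply, (hasDerivAt_Gamma_mul_add h).deriv, mul_comm, mul_div_assoc]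

lemma continuousOn_gammaKernel (hA : 0 < A) : ContinuousOn (gammaKernel A a) (Ioi 0) := by
  refine ContinuousOn.sub (ContinuousOn.div (by fun_prop) (by fun_prop) fun u hu ↦ ?_)
    (ContinuousOn.div (by fun_prop) (by fun_prop) fun _ hu ↦ ne_of_gt hu)
  rw [neg_div]
  exact (one_sub_exp_neg_pos (div_pos hu hA)).ne'

lemma gammaKernel_eq_sub (hA : 0 < A) {u : ℝ} (hu : 0 < u) :
    gammaKernel A a u =
      exp (-(a / A) * u) * binetKernel (u / A) - A * ((1 - exp (-(a / A) * u)) / u) := by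
  have hne := (one_sub_exp_neg_pos (div_pos hu hA)).ne'
  have hexp : -a * u / A = -(a / A) * u := by ring
  rw [gammaKernel, binetKernel, neg_div A u, hexp]
  field_simp
  ring

lemma abs_gammaKernel_le (hA : 0 < A) (ha : 0 ≤ a) {u : ℝ} (hu : 0 < u) :
    |gammaKernel A a u| ≤ 1 + a := by
  have hbinet : |exp (-(a / A) * u) * binetKernel (u / A)| ≤ 1 := by
    rw [abs_mul, abs_exp]
    exact mul_le_one₀ (exp_le_one_iff.2 (by rw [neg_mul, Left.neg_nonpos_iff]; positivity))
      (abs_nonneg _) (abs_binetKernel_le_one (div_pos hu hA))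
  have hexp : |A * ((1 - exp (-(a / A) * u)) / u)| ≤ a := by
    rw [abs_mul, abs_of_pos hA, ← le_div_iff₀' hA]
    exact abs_one_sub_exp_div_le (by positivity) hu
  rw [gammaKernel_eq_sub hA hu]
  exact (abs_sub _ _).trans (add_le_add hbinet hexp)

lemma laplaceConvergent_gammaKernel (hA : 0 < A) (ha : 0 ≤ a) :
    LaplaceConvergent (gammaKernel A a) :=
  .of_abs_le (continuousOn_gammaKernel hA) fun _ ↦ abs_gammaKernel_le hA ha

theorem mul_logDeriv_Gamma_eq (hA : 0 < A) (ha : 0 ≤ a) (hx : 0 < x) :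
    A * logDeriv Gamma (A * x + a) = A * log A + A * log x - laplace (gammaKernel A a) x := by
  have hc : 0 ≤ a / A := by positivity
  have hshift : A * x + a = A * (x + a / A) := by field_simp
  have hbinet : A * laplace binetKernel (A * x + a) =
      laplace (gammaKernel A a) x + A * log ((x + a / A) / x) := by
    rw [hshift, ← laplace_comp_div hA, ← laplace_exp_mul, ← laplace_one_sub_exp_div hc hx,
      ← laplace_const_mul, ← laplace_add (laplaceConvergent_gammaKernel hA ha)
        ((laplaceConvergent_one_sub_exp_div hc).const_mul A) hx]
    exact congrFun (laplace_congr fun u hu ↦ by rw [gammaKernel_eq_sub hA hu, sub_add_cancel]) x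
  rw [logDeriv_Gamma_eq_log_sub_laplace (by positivity), mul_sub, hbinet, hshift,
    log_mul hA.ne' (by positivity), log_div (by positivity) hx.ne']
  ring

end Kernel

section Product

variable {ι : Type*} [Fintype ι] {A a : ι → ℝ} {x : ℝ}

lemma prod_Gamma_pos (hA : ∀ i, 0 < A i) (ha : ∀ i, 0 ≤ a i) (hx : 0 < x) :
    0 < ∏ i, Gamma (A i * x + a i) :=
  Finset.prod_pos fun i _ ↦ Gamma_pos_of_pos (mul_add_pos (hA i) (ha i) hx)

lemma differentiableAt_prod_Gamma (hA : ∀ i, 0 < A i) (ha : ∀ i, 0 ≤ a i) (hx : 0 < x) :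
    DifferentiableAt ℝ (fun x ↦ ∏ i, Gamma (A i * x + a i)) x :=
  .fun_finsetProd fun i _ ↦
    (hasDerivAt_Gamma_mul_add (mul_add_pos (hA i) (ha i) hx)).differentiableAt

lemma laplaceConvergent_sum_gammaKernel (hA : ∀ i, 0 < A i) (ha : ∀ i, 0 ≤ a i) :
    LaplaceConvergent fun u ↦ ∑ i, gammaKernel (A i) (a i) u :=
  .finsetSum fun i _ ↦ laplaceConvergent_gammaKernel (hA i) (ha i)

lemma logDeriv_prod_Gamma (hA : ∀ i, 0 < A i) (ha : ∀ i, 0 ≤ a i) (hx : 0 < x) :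
    logDeriv (fun x ↦ ∏ i, Gamma (A i * x + a i)) x =
      ∑ i, A i * log (A i) + (∑ i, A i) * log x -
        laplace (fun u ↦ ∑ i, gammaKernel (A i) (a i) u) x := by
  have hpos : ∀ i, 0 < A i * x + a i := fun i ↦ mul_add_pos (hA i) (ha i) hx
  rw [logDeriv_prod (fun i _ ↦ (Gamma_pos_of_pos (hpos i)).ne')
      fun i _ ↦ (hasDerivAt_Gamma_mul_add (hpos i)).differentiableAt,
    laplace_finsetSum (fun i _ ↦ laplaceConvergent_gammaKernel (hA i) (ha i)) hx,
    Finset.sum_mul, ← Finset.sum_add_distrib, ← Finset.sum_sub_distrib]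
  refine Finset.sum_congr rfl fun i _ ↦ ?_
  rw [logDeriv_Gamma_mul_add (hpos i), mul_logDeriv_Gamma_eq (hA i) (ha i) hx]

end Product

section Ratio

variable {ι κ : Type*} [Fintype ι] [Fintype κ] {A a : ι → ℝ} {B b : κ → ℝ}

/-- The gamma ratio `W(x) = ∏ Γ(Aᵢ x + aᵢ) / ∏ Γ(Bⱼ x + bⱼ)`. -/
noncomputable def gammaRatio (A a : ι → ℝ) (B b : κ → ℝ) (x : ℝ) : ℝ :=
  (∏ i, Gamma (A i * x + a i)) / ∏ j, Gamma (B j * x + b j)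

/-- The kernel whose Laplace transform appears in `-(log W)'` for the gamma ratio `W`: the function
`P` of the paper minus its pole `(∑ Aᵢ - ∑ Bⱼ) / u`. -/
noncomputable def gammaRatioKernel (A a : ι → ℝ) (B b : κ → ℝ) (u : ℝ) : ℝ :=
  ∑ i, gammaKernel (A i) (a i) u - ∑ j, gammaKernel (B j) (b j) u

lemma gammaRatioKernel_eq (h : ∑ j, B j = ∑ i, A i) (u : ℝ) :
    gammaRatioKernel A a B b u = ∑ i, exp (-a i * u / A i) / (1 - exp (-u / A i)) -
      ∑ j, exp (-b j * u / B j) / (1 - exp (-u / B j)) := by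
  simp only [gammaRatioKernel, gammaKernel, Finset.sum_sub_distrib, ← Finset.sum_div, h]
  ring

lemma continuousOn_gammaRatioKernel (hA : ∀ i, 0 < A i) (hB : ∀ j, 0 < B j) :
    ContinuousOn (gammaRatioKernel A a B b) (Ioi 0) :=
  (continuousOn_finsetSum _ fun i _ ↦ continuousOn_gammaKernel (hA i)).sub
    (continuousOn_finsetSum _ fun j _ ↦ continuousOn_gammaKernel (hB j))

lemma abs_gammaRatioKernel_le (hA : ∀ i, 0 < A i) (hB : ∀ j, 0 < B j) (ha : ∀ i, 0 ≤ a i)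
    (hb : ∀ j, 0 ≤ b j) {u : ℝ} (hu : 0 < u) :
    |gammaRatioKernel A a B b u| ≤ ∑ i, (1 + a i) + ∑ j, (1 + b j) :=
  (abs_sub _ _).trans <| add_le_add
    ((Finset.abs_sum_le_sum_abs _ _).trans <|
      Finset.sum_le_sum fun i _ ↦ abs_gammaKernel_le (hA i) (ha i) hu)
    ((Finset.abs_sum_le_sum_abs _ _).trans <|
      Finset.sum_le_sum fun j _ ↦ abs_gammaKernel_le (hB j) (hb j) hu)

lemma gammaRatio_pos (hA : ∀ i, 0 < A i) (hB : ∀ j, 0 < B j) (ha : ∀ i, 0 ≤ a i)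
    (hb : ∀ j, 0 ≤ b j) {x : ℝ} (hx : 0 < x) : 0 < gammaRatio A a B b x :=
  div_pos (prod_Gamma_pos hA ha hx) (prod_Gamma_pos hB hb hx)

lemma prod_rpow_self_mul_prod_rpow_neg_pos (hA : ∀ i, 0 < A i) (hB : ∀ j, 0 < B j) :
    0 < (∏ i, A i ^ A i) * ∏ j, B j ^ (-B j) :=
  mul_pos (Finset.prod_pos fun i _ ↦ rpow_pos_of_pos (hA i) _)
    (Finset.prod_pos fun j _ ↦ rpow_pos_of_pos (hB j) _)

lemma log_prod_rpow_self_mul_prod_rpow_neg (hA : ∀ i, 0 < A i) (hB : ∀ j, 0 < B j) :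
    log ((∏ i, A i ^ A i) * ∏ j, B j ^ (-B j)) =
      ∑ i, A i * log (A i) - ∑ j, B j * log (B j) := by
  have hA' : ∀ i, 0 < A i ^ A i := fun i ↦ rpow_pos_of_pos (hA i) _
  have hB' : ∀ j, 0 < B j ^ (-B j) := fun j ↦ rpow_pos_of_pos (hB j) _
  rw [log_mul (Finset.prod_pos fun i _ ↦ hA' i).ne' (Finset.prod_pos fun j _ ↦ hB' j).ne',
    log_prod fun i _ ↦ (hA' i).ne', log_prod fun j _ ↦ (hB' j).ne']
  simp only [log_rpow, hA, hB, neg_mul, Finset.sum_neg_distrib, ← sub_eq_add_neg]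

theorem neg_deriv_log_gammaRatio (hA : ∀ i, 0 < A i) (hB : ∀ j, 0 < B j) (ha : ∀ i, 0 ≤ a i)
    (hb : ∀ j, 0 ≤ b j) {x : ℝ} (hx : 0 < x) :
    -deriv (fun y ↦ log (gammaRatio A a B b y)) x =
      laplace (gammaRatioKernel A a B b) x + (∑ j, B j - ∑ i, A i) * log x +
        log (1 / ((∏ i, A i ^ A i) * ∏ j, B j ^ (-B j))) := by
  have hdA := differentiableAt_prod_Gamma hA ha hx
  have hdB := differentiableAt_prod_Gamma hB hb hx
  have hA0 := (prod_Gamma_pos hA ha hx).ne'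
  have hB0 := (prod_Gamma_pos hB hb hx).ne'
  have hderiv : deriv (fun y ↦ log (gammaRatio A a B b y)) x =
      logDeriv (fun x ↦ ∏ i, Gamma (A i * x + a i)) x -
        logDeriv (fun x ↦ ∏ j, Gamma (B j * x + b j)) x := by
    rw [← logDeriv_div x hA0 hB0 hdA hdB]
    exact deriv_log_comp_eq_logDeriv (hdA.div hdB hB0) (div_ne_zero hA0 hB0)
  have hlaplace : laplace (gammaRatioKernel A a B b) x =
      laplace (fun u ↦ ∑ i, gammaKernel (A i) (a i) u) x -
        laplace (fun u ↦ ∑ j, gammaKernel (B j) (b j) u) x :=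
    laplace_sub (laplaceConvergent_sum_gammaKernel hA ha)
      (laplaceConvergent_sum_gammaKernel hB hb) hx
  rw [hderiv, hlaplace, logDeriv_prod_Gamma hA ha hx, logDeriv_prod_Gamma hB hb hx, one_div,
    log_inv, log_prod_rpow_self_mul_prod_rpow_neg hA hB]
  ring

theorem logCompletelyMonotonic_gammaRatio_iff (hA : ∀ i, 0 < A i) (hB : ∀ j, 0 < B j)
    (ha : ∀ i, 0 ≤ a i) (hb : ∀ j, 0 ≤ b j) :
    LogCompletelyMonotonic (gammaRatio A a B b) ↔
      ∑ j, B j = ∑ i, A i ∧ (∏ i, A i ^ A i) * ∏ j, B j ^ (-B j) ≤ 1 ∧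
        ∀ u > 0, 0 ≤ gammaRatioKernel A a B b u := by
  have hρ := prod_rpow_self_mul_prod_rpow_neg_pos hA hB
  rw [LogCompletelyMonotonic,
    and_iff_right fun x hx ↦ gammaRatio_pos hA hB ha hb hx,
    completelyMonotonicOn_congr fun x hx ↦ neg_deriv_log_gammaRatio hA hB ha hb hx,
    completelyMonotonicOn_laplace_add_log_add_const_iff (continuousOn_gammaRatioKernel hA hB)
      fun u hu ↦ abs_gammaRatioKernel_le hA hB ha hb hu,
    sub_eq_zero, one_div, log_nonneg_iff (inv_pos.2 hρ), one_le_inv₀ hρ]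

end Ratio

end GammaRatio

theorem stmt8 (p q : ℕ) (hp : 1 ≤ p) (hq : 1 ≤ q)
    (A : Fin p → ℝ) (B : Fin q → ℝ) (a : Fin p → ℝ) (b : Fin q → ℝ)
    (hA : ∀ i, 0 < A i) (hB : ∀ j, 0 < B j)
    (ha : ∀ i, 0 ≤ a i) (hb : ∀ j, 0 ≤ b j)
    (W : ℝ → ℝ)
    (hW : ∀ x, W x = (∏ i, Real.Gamma (A i * x + a i)) / ∏ j, Real.Gamma (B j * x + b j))
    (P : ℝ → ℝ)
    (hP : ∀ u, P u = (∑ i, Real.exp (-a i * u / A i) / (1 - Real.exp (-u / A i))) -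
      ∑ j, Real.exp (-b j * u / B j) / (1 - Real.exp (-u / B j)))
    (ρ : ℝ) (hρ : ρ = (∏ i, A i ^ A i) * ∏ j, B j ^ (-B j)) :
    (LogCompletelyMonotonic W ↔
        ((∑ j, B j = ∑ i, A i) ∧ ρ ≤ 1 ∧ ∀ u > (0 : ℝ), 0 ≤ P u)) ∧
      (LogCompletelyMonotonic W → ∀ x > (0 : ℝ),
        -deriv (fun y => Real.log (W y)) x =
          (∫ u in Set.Ioi (0 : ℝ), Real.exp (-x * u) * P u) + Real.log (1 / ρ)) := by
  obtain rfl : W = gammaRatio A a B b := funext hW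
  subst hρ
  have hkernel (h : ∑ j, B j = ∑ i, A i) : gammaRatioKernel A a B b = P :=
    funext fun u ↦ (gammaRatioKernel_eq h u).trans (hP u).symm
  have hiff := logCompletelyMonotonic_gammaRatio_iff hA hB ha hb
  refine ⟨hiff.trans (and_congr_right fun h ↦ by rw [hkernel h]), fun hmono x hx ↦ ?_⟩
  obtain ⟨hAB, -⟩ := hiff.1 hmono
  rw [neg_deriv_log_gammaRatio hA hB ha hb hx, hkernel hAB, hAB, sub_self, zero_mul, add_zero,
    laplace]
end

section
/- Let p, q ≥ 1, let A_1,…,A_p, B_1,…,B_q be strictly positive reals and a_1,…,a_p, b_1,…,b_q be reals with Σ_{i=1}^p A_i = Σ_{j=1}^q B_j and μ = Σ_{j=1}^q b_j − Σ_{k=1}^p a_k + (p−q)/2 > 0. Set ρ = ∏_{k=1}^p A_k^{A_k} · ∏_{j=1}^q B_j^{−B_j} and γ = −min_{1≤k≤p}(a_k/A_k), and fix c > γ. Then for every real x > ρ the limit lim_{R→∞} (1/(2π)) ∫_{−R}^{R} [∏_{k=1}^p Γ(A_k(c+it)+a_k) / ∏_{j=1}^q Γ(B_j(c+it)+b_j)]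 · x^{−(c+it)} dt exists and equals 0. -/
open MeasureTheory Filter

/-!
The integrand extends to a holomorphic function `F` on the closed half-plane `c ≤ Re s`, so by
Cauchy's theorem on the rectangle with sides on `Re s = c`, `Re s = X` and `Im s = ± R` the integral
over `[c - iR, c + iR]` is controlled by the other three sides. By Stirling's formula the balance
condition `∑ A = ∑ B` removes all superexponential factors, and `F s` has the order of magnitude of
`(ρ / x) ^ (Re s) * |s| ^ (-μ)`. Since `ρ < x`, the side `Re s = X` contributes nothing as `X → ∞`
and the horizontal sides are integrable in `Re s`; since `0 < μ`, their contribution vanishes as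
`R → ∞`.

Stirling's formula is needed up to the imaginary directions. Its defect in the functional equation
of `Γ` is `O(|z|⁻²)`, and summed along `z, z + 1, z + 2, …` it is `O(|z|⁻¹)` as long as `0 ≤ Re z`.
This moves the formula from large integer translates, where it follows from Gauss's product and
Stirling's formula for factorials, back to `z`.
-/

section

open Complex Bornology Asymptotics Topology

/-- The filter of neighbourhoods of infinity inside the closed half-plane `σ ≤ Re z`. -/
noncomputable def halfPlaneAtInfty (σ : ℝ) : Filter ℂ := cobounded ℂ ⊓ 𝓟 {z | σ ≤ z.re}

lemma halfPlaneAtInfty_le_cobounded (σ : ℝ) : halfPlaneAtInfty σ ≤ cobounded ℂ := inf_le_left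

lemma eventually_le_re_halfPlaneAtInfty (σ : ℝ) : ∀ᶠ z in halfPlaneAtInfty σ, σ ≤ z.re :=
  (eventually_principal.2 fun _ => id).filter_mono inf_le_right

lemma eventually_halfPlaneAtInfty_iff {σ : ℝ} {P : ℂ → Prop} :
    (∀ᶠ z in halfPlaneAtInfty σ, P z) ↔ ∃ T : ℝ, ∀ z : ℂ, σ ≤ z.re → T ≤ ‖z‖ → P z := by
  rw [halfPlaneAtInfty, eventually_inf_principal, hasBasis_cobounded_norm.eventually_iff]
  simp only [true_and, Set.mem_ofPred_eq]
  exact exists_congr fun T => forall_congr' fun z => forall_comm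

lemma tendsto_affine_halfPlaneAtInfty {A σ τ : ℝ} {a : ℂ} (hA : 0 < A)
    (h : τ ≤ A * σ + a.re) :
    Tendsto (fun u : ℂ => A * u + a) (halfPlaneAtInfty σ) (halfPlaneAtInfty τ) := by
  refine tendsto_inf.2 ⟨?_, tendsto_principal.2 ?_⟩
  · exact ((tendsto_add_const_cobounded a).comp
      (tendsto_mul_left_cobounded (ofReal_ne_zero.2 hA.ne'))).mono_left inf_le_left
  · filter_upwards [eventually_le_re_halfPlaneAtInfty σ] with u hu
    simp only [add_re, re_ofReal_mul]
    linarith [mul_le_mul_of_nonneg_left hu hA.le]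

lemma tendsto_add_mul_log_one_add_div (α w : ℂ) :
    Tendsto (fun u : ℂ => (u + α) * log (1 + w / u)) (cobounded ℂ) (𝓝 w) := by
  have hslope : Tendsto (fun u : ℂ => u * log (1 + w / u)) (cobounded ℂ) (𝓝 w) := by
    have hderiv : HasDerivAt (fun t : ℂ => log (1 + w * t)) w 0 := by
      simpa using (((hasDerivAt_id (0 : ℂ)).const_mul w).const_add 1).clog (by simp)
    simpa [Function.comp_def, slope_fun_def, div_eq_mul_inv] using
      (hasDerivAt_iff_tendsto_slope.1 hderiv).comp tendsto_inv₀_cobounded'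
  have hfactor : Tendsto (fun u : ℂ => 1 + α * u⁻¹) (cobounded ℂ) (𝓝 1) := by
    simpa using (tendsto_inv₀_cobounded.const_mul α).const_add 1
  refine (by simpa using hfactor.mul hslope : Tendsto _ _ (𝓝 w)).congr' ?_
  filter_upwards [eventually_ne_cobounded 0] with u hu
  field_simp

/-! ### Stirling's formula in the closed right half-plane -/

/-- Stirling's approximation to `Γ z`, without the constant factor `√(2π)`. -/
noncomputable def stirlingApprox (z : ℂ) : ℂ := z ^ (z - 1 / 2) * exp (-z)

/-- The defect of Stirling's approximation in the functional equation of `Γ`: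
`z * stirlingApprox z = stirlingApprox (z + 1) * exp (stirlingDefect z)`. -/
noncomputable def stirlingDefect (z : ℂ) : ℂ := 1 - (z + 1 / 2) * log (1 + z⁻¹)

lemma stirlingApprox_of_ne_zero {z : ℂ} (hz : z ≠ 0) :
    stirlingApprox z = exp ((z - 1 / 2) * log z - z) := by
  rw [stirlingApprox, cpow_def_of_ne_zero hz, ← exp_add]
  ring_nf

lemma log_mul_of_re_nonneg_of_re_pos {z w : ℂ} (hz : 0 ≤ z.re) (hz₀ : z ≠ 0) (hw : 0 < w.re) :
    log (z * w) = log z + log w := by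
  have hw₀ : w ≠ 0 := fun h => by simp [h] at hw
  have hargz := abs_le.1 (abs_arg_le_pi_div_two_iff.2 hz)
  have hargw := abs_lt.1 (abs_arg_lt_pi_div_two_iff.2 (Or.inl hw))
  exact (log_mul_eq_add_log_iff hz₀ hw₀).2 ⟨by linarith, by linarith⟩

lemma norm_log_one_add_sub_le {w : ℂ} (hw : ‖w‖ ≤ 1 / 2) :
    ‖log (1 + w) - (w - w ^ 2 / 2)‖ ≤ 2 / 3 * ‖w‖ ^ 3 := by
  have hTaylor := norm_log_sub_logTaylor_le 2 (z := w) (by linarith)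
  have hlogTaylor : logTaylor (2 + 1) w = w - w ^ 2 / 2 := by
    simp only [logTaylor_succ, logTaylor_zero, Pi.add_apply]
    push_cast
    ring
  have hinv : (1 - ‖w‖)⁻¹ ≤ 2 := by
    rw [inv_le_comm₀ (by linarith) two_pos]
    linarith
  rw [hlogTaylor] at hTaylor
  calc ‖log (1 + w) - (w - w ^ 2 / 2)‖ ≤ ‖w‖ ^ 3 * (1 - ‖w‖)⁻¹ / 3 := by
        convert hTaylor using 2
        norm_num
    _ ≤ ‖w‖ ^ 3 * 2 / 3 := by gcongr
    _ = 2 / 3 * ‖w‖ ^ 3 := by ring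

lemma norm_stirlingDefect_le {z : ℂ} (hz : 2 ≤ ‖z‖) : ‖stirlingDefect z‖ ≤ 2 / ‖z‖ ^ 2 := by
  have hz₀ : z ≠ 0 := norm_pos_iff.1 (by linarith)
  have hw : ‖z⁻¹‖ ≤ 1 / 2 := by
    rw [norm_inv, one_div]
    exact inv_anti₀ two_pos hz
  set r := log (1 + z⁻¹) - (z⁻¹ - z⁻¹ ^ 2 / 2) with hr
  have hr_le : ‖r‖ ≤ 2 / 3 * ‖z⁻¹‖ ^ 3 := norm_log_one_add_sub_le hw
  have hdefect : stirlingDefect z = z⁻¹ ^ 2 / 4 - (z + 1 / 2) * r := by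
    rw [stirlingDefect, hr]
    field_simp
    ring
  have hsum : ‖z + 1 / 2‖ ≤ 5 / 4 * ‖z‖ :=
    calc ‖z + 1 / 2‖ ≤ ‖z‖ + ‖(1 / 2 : ℂ)‖ := norm_add_le _ _
      _ ≤ 5 / 4 * ‖z‖ := by
        rw [norm_div, norm_one, RCLike.norm_ofNat]
        linarith
  calc ‖stirlingDefect z‖ ≤ ‖z⁻¹ ^ 2 / 4‖ + ‖(z + 1 / 2) * r‖ := by
        rw [hdefect]; exact norm_sub_le _ _
    _ ≤ ‖z⁻¹‖ ^ 2 / 4 + 5 / 4 * ‖z‖ * (2 / 3 * ‖z⁻¹‖ ^ 3) := by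
        rw [norm_div, norm_pow, norm_mul, RCLike.norm_ofNat]
        gcongr
    _ = 13 / 12 / ‖z‖ ^ 2 := by
        rw [norm_inv]
        field_simp
        norm_num1
    _ ≤ 2 / ‖z‖ ^ 2 := by gcongr; norm_num

lemma Gamma_div_stirlingApprox_add_one {z : ℂ} (hz : 0 ≤ z.re) (hz₀ : z ≠ 0) :
    Gamma (z + 1) / stirlingApprox (z + 1) =
      Gamma z / stirlingApprox z * exp (stirlingDefect z) := by
  have hz1 : z + 1 ≠ 0 := fun h => by
    have := congrArg re h
    simp only [add_re, one_re, zero_re] at this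
    linarith
  have hinv : 0 < (1 + z⁻¹).re := by
    rw [add_re, one_re, inv_re]
    have := div_nonneg hz (normSq_nonneg z)
    linarith
  have hlog : log (z + 1) = log z + log (1 + z⁻¹) := by
    rw [← log_mul_of_re_nonneg_of_re_pos hz hz₀ hinv]
    congr 1
    field_simp
  have happrox : z * stirlingApprox z = stirlingApprox (z + 1) * exp (stirlingDefect z) := by
    rw [stirlingApprox_of_ne_zero hz₀, stirlingApprox_of_ne_zero hz1, stirlingDefect, ← exp_add,
      hlog]
    nth_rewrite 1 [← exp_log hz₀]
    rw [← exp_add]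
    ring_nf
  rw [Gamma_add_one z hz₀, div_mul_eq_mul_div, div_eq_div_iff]
  · linear_combination Gamma z * happrox
  · rw [stirlingApprox_of_ne_zero hz1]; exact exp_ne_zero _
  · rw [stirlingApprox_of_ne_zero hz₀]; exact exp_ne_zero _

lemma sq_norm_add_natCast (z : ℂ) (k : ℕ) :
    ‖z + k‖ ^ 2 = ‖z‖ ^ 2 + 2 * z.re * k + k ^ 2 := by
  simp only [Complex.sq_norm, normSq_apply, add_re, add_im, natCast_re, natCast_im]
  ring

lemma sq_add_natCast_le_two_mul_sq_norm {z : ℂ} (hz : 0 ≤ z.re) (k : ℕ) :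
    (‖z‖ + k) ^ 2 ≤ 2 * ‖z + k‖ ^ 2 := by
  have : 0 ≤ z.re * k := by positivity
  nlinarith [sq_norm_add_natCast z k, sq_nonneg (‖z‖ - k)]

lemma norm_le_norm_add_natCast {z : ℂ} (hz : 0 ≤ z.re) (k : ℕ) : ‖z‖ ≤ ‖z + k‖ := by
  have : 0 ≤ z.re * k := by positivity
  refine (sq_le_sq₀ (norm_nonneg _) (norm_nonneg _)).1 ?_
  nlinarith [sq_norm_add_natCast z k]

lemma Gamma_div_stirlingApprox_add_natCast {z : ℂ} (hz : 0 ≤ z.re) (hz₀ : z ≠ 0) (n : ℕ) :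
    Gamma (z + n) / stirlingApprox (z + n) =
      Gamma z / stirlingApprox z * exp (∑ k ∈ Finset.range n, stirlingDefect (z + k)) := by
  induction n with
  | zero => simp
  | succ n ih =>
    have hre : 0 ≤ (z + n).re := by
      rw [add_re, natCast_re]
      positivity
    have hne : z + n ≠ 0 :=
      norm_pos_iff.1 ((norm_pos_iff.2 hz₀).trans_le (norm_le_norm_add_natCast hz n))
    rw [Nat.cast_succ, ← add_assoc, Gamma_div_stirlingApprox_add_one hre hne, ih,
      Finset.sum_range_succ, exp_add, mul_assoc]

lemma norm_sum_stirlingDefect_le {z : ℂ} (hz : 0 ≤ z.re) (hz2 : 2 ≤ ‖z‖) (n : ℕ) :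
    ‖∑ k ∈ Finset.range n, stirlingDefect (z + k)‖ ≤ 4 / (‖z‖ - 1) - 4 / (‖z‖ + n - 1) := by
  induction n with
  | zero => simp
  | succ n ih =>
    have hsq := sq_add_natCast_le_two_mul_sq_norm hz n
    have hnorm : 2 ≤ ‖z + n‖ := hz2.trans (norm_le_norm_add_natCast hz n)
    have hterm : ‖stirlingDefect (z + n)‖ ≤ 4 / (‖z‖ + n - 1) - 4 / (‖z‖ + n) :=
      calc ‖stirlingDefect (z + n)‖ ≤ 2 / ‖z + n‖ ^ 2 := norm_stirlingDefect_le hnorm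
        _ ≤ 4 / ((‖z‖ + n - 1) * (‖z‖ + n)) := by
          rw [div_le_div_iff₀ (by positivity) (by apply mul_pos <;> linarith)]
          nlinarith
        _ = 4 / (‖z‖ + n - 1) - 4 / (‖z‖ + n) := by
          rw [div_sub_div _ _ (by linarith) (by linarith)]
          ring
    rw [Finset.sum_range_succ]
    refine (norm_add_le_of_le ih hterm).trans_eq ?_
    push_cast
    ring

lemma Gamma_add_natCast {z : ℂ} (hz : ∀ m : ℕ, z ≠ -m) (n : ℕ) :
    Gamma (z + n) = Gamma z * ∏ k ∈ Finset.range n, (z + k) := by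
  induction n with
  | zero => simp
  | succ n ih =>
    have hne : z + n ≠ 0 := fun h => hz n (eq_neg_of_add_eq_zero_left h)
    rw [Nat.cast_succ, ← add_assoc, Gamma_add_one _ hne, ih, Finset.prod_range_succ]
    ring

lemma tendsto_Gamma_add_natCast_div {z : ℂ} (hz : ∀ m : ℕ, z ≠ -m) :
    Tendsto (fun n : ℕ => Gamma (z + (n + 1 : ℕ)) / (n ^ z * n.factorial)) atTop (𝓝 1) := by
  have hΓ := Gamma_ne_zero hz
  have hlim := tendsto_const_nhds.div (GammaSeq_tendsto_Gamma z) hΓ (a := Gamma z)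
  rw [div_self hΓ] at hlim
  refine hlim.congr fun n => ?_
  rw [Pi.div_apply, GammaSeq, div_div_eq_mul_div, Gamma_add_natCast hz]

lemma natCast_cpow_mul_factorial {n : ℕ} (hn : n ≠ 0) (z : ℂ) :
    (n : ℂ) ^ z * n.factorial =
      Stirling.stirlingSeq n * √2 * exp ((z + n + 1 / 2) * log n - n) := by
  have hn' : (n : ℂ) ≠ 0 := Nat.cast_ne_zero.2 hn
  have hsqrt : ((√n : ℝ) : ℂ) = exp (log n / 2) := by
    rw [← natCast_log, Real.sqrt_eq_rpow, Real.rpow_def_of_pos (by positivity)]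
    push_cast
    ring_nf
  have hpow : ((n : ℂ) / exp 1) ^ n = exp (n * log n - n) := by
    nth_rewrite 1 [← exp_log hn']
    rw [← exp_sub, ← exp_nat_mul]
    ring_nf
  have hfactorial : (n.factorial : ℝ) =
      Stirling.stirlingSeq n * √2 * (√n * (n / Real.exp 1) ^ n) := by
    rw [Stirling.stirlingSeq, Real.sqrt_mul zero_le_two]
    field_simp
  have hfactorial' := congrArg ofReal hfactorial
  push_cast at hfactorial'
  rw [cpow_def_of_ne_zero hn', hfactorial', hsqrt, hpow, ← exp_add, mul_left_comm, ← exp_add]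
  ring_nf

lemma stirlingApprox_add_natCast_add_one {n : ℕ} (hn : n ≠ 0) {z : ℂ} (hz : z + (n + 1 : ℕ) ≠ 0) :
    stirlingApprox (z + (n + 1 : ℕ)) = exp ((z + n + 1 / 2) * log n - n) *
      exp ((n + (z + 1 / 2)) * log (1 + (z + 1) / n) - (z + 1)) := by
  have hn' : (n : ℂ) ≠ 0 := Nat.cast_ne_zero.2 hn
  have hfactor : z + (n + 1 : ℕ) = (n : ℝ) * (1 + (z + 1) / n) := by
    push_cast
    field_simp
    ring
  have hlog : log (z + (n + 1 : ℕ)) = log n + log (1 + (z + 1) / n) := by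
    rw [hfactor, log_ofReal_mul (by positivity) (right_ne_zero_of_mul (hfactor ▸ hz)),
      natCast_log]
  rw [stirlingApprox_of_ne_zero hz, hlog, ← exp_add]
  push_cast
  ring_nf

lemma tendsto_Gamma_div_stirlingApprox_add_natCast {z : ℂ} (hz : ∀ m : ℕ, z ≠ -m) :
    Tendsto (fun n : ℕ => Gamma (z + n) / stirlingApprox (z + n)) atTop
      (𝓝 √(2 * Real.pi)) := by
  rw [← tendsto_add_atTop_iff_nat 1]
  have hexp : Tendsto (fun n : ℕ => exp ((n + (z + 1 / 2)) * log (1 + (z + 1) / n) - (z + 1)))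
      atTop (𝓝 1) := by
    have := ((tendsto_add_mul_log_one_add_div (z + 1 / 2) (z + 1)).comp
      tendsto_natCast_atTop_cobounded).sub_const (z + 1)
    rw [sub_self] at this
    simpa using this.cexp
  have hseq : Tendsto (fun n => (Stirling.stirlingSeq n : ℂ) * √2) atTop (𝓝 √(2 * Real.pi)) := by
    rw [Real.sqrt_mul zero_le_two, mul_comm √2, ofReal_mul]
    exact Stirling.tendsto_stirlingSeq_sqrt_pi.ofReal.mul_const _
  have hlim := ((tendsto_Gamma_add_natCast_div hz).mul hseq).div hexp one_ne_zero
  rw [one_mul, div_one] at hlim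
  refine hlim.congr' ?_
  filter_upwards [eventually_ne_atTop 0] with n hn
  have hne : z + (n + 1 : ℕ) ≠ 0 := fun h => hz (n + 1) (eq_neg_of_add_eq_zero_left h)
  have hStirling : (Stirling.stirlingSeq n : ℂ) ≠ 0 := by
    obtain ⟨m, rfl⟩ := Nat.exists_eq_succ_of_ne_zero hn
    exact ofReal_ne_zero.2 (Stirling.stirlingSeq'_pos m).ne'
  rw [Pi.div_apply, natCast_cpow_mul_factorial hn, stirlingApprox_add_natCast_add_one hn hne]
  have := exp_ne_zero ((z + n + 1 / 2) * log n - n)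
  field_simp

lemma norm_Gamma_div_stirlingApprox_sub_le {z : ℂ} (hz : 0 ≤ z.re) (hz5 : 5 ≤ ‖z‖) :
    ‖Gamma z / stirlingApprox z - √(2 * Real.pi)‖ ≤ √(2 * Real.pi) * (8 / (‖z‖ - 1)) := by
  have hz₀ : z ≠ 0 := norm_pos_iff.1 (by linarith)
  have hpole (m : ℕ) : z ≠ -m := fun h => by
    have := norm_le_norm_add_natCast hz m
    rw [h, neg_add_cancel, norm_zero, ← h] at this
    linarith
  have hlim := tendsto_Gamma_div_stirlingApprox_add_natCast hpole
  have hlim_norm := hlim.norm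
  rw [norm_real, Real.norm_of_nonneg (Real.sqrt_nonneg _)] at hlim_norm
  refine le_of_tendsto_of_tendsto' (tendsto_const_nhds.sub hlim).norm (hlim_norm.mul_const _)
    fun n => ?_
  set S := ∑ k ∈ Finset.range n, stirlingDefect (z + k) with hS
  have hS_le : ‖-S‖ ≤ 4 / (‖z‖ - 1) := by
    have : 0 ≤ 4 / (‖z‖ + n - 1) := div_nonneg zero_le_four (by linarith [n.cast_nonneg (α := ℝ)])
    rw [norm_neg]
    linarith [norm_sum_stirlingDefect_le hz (by linarith) n]
  have hS_one : ‖-S‖ ≤ 1 := hS_le.trans ((div_le_one (by linarith)).2 (by linarith))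
  have hquot : Gamma z / stirlingApprox z - Gamma (z + n) / stirlingApprox (z + n) =
      Gamma (z + n) / stirlingApprox (z + n) * (exp (-S) - 1) := by
    rw [Gamma_div_stirlingApprox_add_natCast hz hz₀, ← hS, mul_sub_one, mul_assoc, ← exp_add,
      add_neg_cancel, exp_zero, mul_one]
  rw [hquot, norm_mul]
  gcongr
  calc ‖exp (-S) - 1‖ ≤ 2 * ‖-S‖ := norm_exp_sub_one_le hS_one
    _ ≤ 8 / (‖z‖ - 1) := by linarith [show 8 / (‖z‖ - 1) = 2 * (4 / (‖z‖ - 1)) by ring]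

lemma tendsto_Gamma_div_stirlingApprox :
    Tendsto (fun z => Gamma z / stirlingApprox z) (halfPlaneAtInfty 0) (𝓝 √(2 * Real.pi)) := by
  have hbound : Tendsto (fun z : ℂ => √(2 * Real.pi) * (8 / (‖z‖ - 1))) (halfPlaneAtInfty 0)
      (𝓝 0) := by
    have hnorm : Tendsto (fun z : ℂ => ‖z‖ - 1) (halfPlaneAtInfty 0) atTop :=
      tendsto_atTop_add_const_right _ _
        (tendsto_norm_cobounded_atTop.mono_left (halfPlaneAtInfty_le_cobounded 0))
    simpa using (hnorm.const_div_atTop 8).const_mul √(2 * Real.pi)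
  refine tendsto_iff_norm_sub_tendsto_zero.2 (squeeze_zero' ?_ ?_ hbound)
  · exact .of_forall fun _ => norm_nonneg _
  · exact eventually_halfPlaneAtInfty_iff.2 ⟨5, fun _ => norm_Gamma_div_stirlingApprox_sub_le⟩

lemma isTheta_Gamma_stirlingApprox : Gamma =Θ[halfPlaneAtInfty 0] stirlingApprox :=
  (isTheta_of_div_tendsto_nhds_ne_zero tendsto_Gamma_div_stirlingApprox
    (ofReal_ne_zero.2 (Real.sqrt_pos.2 Real.two_pi_pos).ne')).symm

/-! ### Growth of `Γ (A * u + a)` and of balanced quotients -/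

/-- The growth of `Γ (A * u + a)`, up to constants, as `u` tends to infinity in a right half-plane.
The first factor depends only on `A`, through the exponent, so it cancels from a quotient of
products of Gamma functions when the sums of the coefficients `A` agree. -/
noncomputable def gammaGrowth (A : ℝ) (a u : ℂ) : ℝ :=
  Real.exp (A * (u * log u - u).re) * (A ^ A) ^ u.re * ‖u‖ ^ (a.re - 1 / 2)

lemma gammaGrowth_add_one (A : ℝ) (a : ℂ) {u : ℂ} (hu : u ≠ 0) :
    gammaGrowth A (a + 1) u = gammaGrowth A a u * ‖u‖ := by
  have hpow : ‖u‖ ^ ((a + 1).re - 1 / 2) = ‖u‖ ^ (a.re - 1 / 2) * ‖u‖ := by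
    rw [← Real.rpow_add_one (norm_ne_zero_iff.2 hu)]
    congr 1
    simp only [add_re, one_re]
    ring
  rw [gammaGrowth, gammaGrowth, hpow]
  ring

lemma affine_eq_mul_mul {A : ℝ} (hA : A ≠ 0) (a : ℂ) {u : ℂ} (hu : u ≠ 0) :
    A * u + a = A * (u * (1 + a / A / u)) := by
  have hA₀ : (A : ℂ) ≠ 0 := ofReal_ne_zero.2 hA
  field_simp

lemma stirlingApprox_affine {A : ℝ} (hA : 0 < A) {a u : ℂ} (hu : 0 ≤ u.re) (hu₀ : u ≠ 0)
    (hre : 0 < (1 + a / A / u).re) :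
    stirlingApprox (A * u + a) =
      exp (A * (u * log u - u)) * exp (u * (A * Real.log A)) * u ^ (a - 1 / 2) *
        exp ((a - 1 / 2) * Real.log A - a +
          A * ((u + (a - 1 / 2) / A) * log (1 + a / A / u))) := by
  have hA₀ : (A : ℂ) ≠ 0 := ofReal_ne_zero.2 hA.ne'
  have hfactor := affine_eq_mul_mul hA.ne' a hu₀
  have hne : u * (1 + a / A / u) ≠ 0 := mul_ne_zero hu₀ fun h => by simp [h] at hre
  have hlog : log (A * u + a) = Real.log A + (log u + log (1 + a / A / u)) := by
    rw [hfactor, log_ofReal_mul hA hne, log_mul_of_re_nonneg_of_re_pos hu hu₀ hre]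
  rw [stirlingApprox_of_ne_zero (hfactor ▸ mul_ne_zero hA₀ hne), hlog, cpow_def_of_ne_zero hu₀,
    ← exp_add, ← exp_add, ← exp_add]
  congr 1
  field_simp
  ring

lemma tendsto_one_add_div_cobounded (w : ℂ) :
    Tendsto (fun u : ℂ => 1 + w / u) (cobounded ℂ) (𝓝 1) := by
  simpa [div_eq_mul_inv] using (tendsto_inv₀_cobounded.const_mul w).const_add 1

lemma eventually_stirlingApprox_affine {A : ℝ} (hA : 0 < A) (a : ℂ) :
    ∀ᶠ u in halfPlaneAtInfty 0, stirlingApprox (A * u + a) =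
      exp (A * (u * log u - u)) * exp (u * (A * Real.log A)) * u ^ (a - 1 / 2) *
        exp ((a - 1 / 2) * Real.log A - a +
          A * ((u + (a - 1 / 2) / A) * log (1 + a / A / u))) := by
  have hle := halfPlaneAtInfty_le_cobounded 0
  have hre : ∀ᶠ u : ℂ in cobounded ℂ, 0 < (1 + a / A / u).re :=
    ((continuous_re.tendsto 1).comp (tendsto_one_add_div_cobounded _)).eventually_const_lt one_pos
  filter_upwards [eventually_le_re_halfPlaneAtInfty 0, hle (eventually_ne_cobounded 0), hle hre]
    with u hu hu₀ hre
  exact stirlingApprox_affine hA hu hu₀ hre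

lemma isTheta_exp_of_tendsto {α : Type*} {l : Filter α} {f : α → ℂ} {w : ℂ}
    (hf : Tendsto f l (𝓝 w)) : (fun x => exp (f x)) =Θ[l] fun _ => (1 : ℝ) :=
  ((isEquivalent_const_iff_tendsto (exp_ne_zero w)).2 hf.cexp).isTheta.trans
    (isTheta_const_const (exp_ne_zero w) one_ne_zero)

lemma isTheta_stirlingApprox_affine {A : ℝ} (hA : 0 < A) (a : ℂ) :
    (fun u : ℂ => stirlingApprox (A * u + a)) =Θ[halfPlaneAtInfty 0] gammaGrowth A a := by
  have hexp_log : (fun u : ℂ => exp (A * (u * log u - u))) =Θ[halfPlaneAtInfty 0]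
      fun u => Real.exp (A * (u * log u - u).re) :=
    .of_norm_eventuallyEq (.of_forall fun u => by simp only [norm_exp, re_ofReal_mul])
  have hexp_linear : (fun u : ℂ => exp (u * (A * Real.log A))) =Θ[halfPlaneAtInfty 0]
      fun u => (A ^ A) ^ u.re := by
    refine .of_norm_eventuallyEq (.of_forall fun u => ?_)
    simp only [← ofReal_mul]
    rw [norm_exp, re_mul_ofReal, Real.rpow_def_of_pos (by positivity), Real.log_rpow hA, mul_comm]
  have hcpow : (fun u : ℂ => u ^ (a - 1 / 2)) =Θ[halfPlaneAtInfty 0]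
      fun u => ‖u‖ ^ (a.re - 1 / 2) := by
    have := isTheta_cpow_const_rpow (l := halfPlaneAtInfty 0) (f := id) (b := a - 1 / 2)
      fun _ _ => halfPlaneAtInfty_le_cobounded 0 (eventually_ne_cobounded 0)
    simpa using this
  have hremainder : (fun u : ℂ => exp ((a - 1 / 2) * Real.log A - a +
      A * ((u + (a - 1 / 2) / A) * log (1 + a / A / u)))) =Θ[halfPlaneAtInfty 0]
        fun _ => (1 : ℝ) :=
    isTheta_exp_of_tendsto <| (((tendsto_add_mul_log_one_add_div _ _).mono_left
      (halfPlaneAtInfty_le_cobounded 0)).const_mul (A : ℂ)).const_add _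
  refine EventuallyEq.trans_isTheta (eventually_stirlingApprox_affine hA a) ?_
  have hprod := ((hexp_log.mul hexp_linear).mul hcpow).mul hremainder
  simp only [mul_one] at hprod
  exact hprod

lemma isTheta_affine {A : ℝ} (hA : A ≠ 0) (a : ℂ) :
    (fun u : ℂ => A * u + a) =Θ[cobounded ℂ] fun u => u := by
  have hA₀ : (A : ℂ) ≠ 0 := ofReal_ne_zero.2 hA
  have hlim : Tendsto (fun u : ℂ => (A * u + a) / u) (cobounded ℂ) (𝓝 A) := by
    refine (by simpa using (tendsto_one_add_div_cobounded (a / A)).const_mul (A : ℂ) :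
      Tendsto _ _ (𝓝 (A : ℂ))).congr' ?_
    filter_upwards [eventually_ne_cobounded 0] with u hu
    field_simp
  exact (isTheta_of_div_tendsto_nhds_ne_zero hlim hA₀).symm

lemma isTheta_Gamma_affine_of_re_nonneg {A : ℝ} (hA : 0 < A) {a : ℂ} (ha : 0 ≤ a.re) :
    (fun u : ℂ => Gamma (A * u + a)) =Θ[halfPlaneAtInfty 0] gammaGrowth A a := by
  have haffine : Tendsto (fun u : ℂ => A * u + a) (halfPlaneAtInfty 0) (halfPlaneAtInfty 0) :=
    tendsto_affine_halfPlaneAtInfty hA (by simpa using ha)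
  have hGamma : (fun u : ℂ => Gamma (A * u + a)) =Θ[halfPlaneAtInfty 0]
      fun u => stirlingApprox (A * u + a) :=
    ⟨isTheta_Gamma_stirlingApprox.1.comp_tendsto haffine,
      isTheta_Gamma_stirlingApprox.2.comp_tendsto haffine⟩
  exact hGamma.trans (isTheta_stirlingApprox_affine hA a)

lemma eventually_affine_ne_zero {A : ℝ} (hA : A ≠ 0) (a : ℂ) :
    ∀ᶠ u : ℂ in cobounded ℂ, A * u + a ≠ 0 :=
  ((tendsto_add_const_cobounded a).comp
    (tendsto_mul_left_cobounded (ofReal_ne_zero.2 hA))).eventually (eventually_ne_cobounded 0)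

lemma isTheta_Gamma_affine_of_add_one {A : ℝ} (hA : 0 < A) {a : ℂ}
    (h : (fun u : ℂ => Gamma (A * u + (a + 1))) =Θ[halfPlaneAtInfty 0] gammaGrowth A (a + 1)) :
    (fun u : ℂ => Gamma (A * u + a)) =Θ[halfPlaneAtInfty 0] gammaGrowth A a := by
  have hle := halfPlaneAtInfty_le_cobounded 0
  have hlinear : (fun u : ℂ => A * u + a) =Θ[halfPlaneAtInfty 0] fun u => ‖u‖ :=
    isTheta_norm_right.2 ((isTheta_affine hA.ne' a).mono hle)
  have hGamma : (fun u : ℂ => Gamma (A * u + a)) =ᶠ[halfPlaneAtInfty 0]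
      fun u => Gamma (A * u + (a + 1)) / (A * u + a) := by
    filter_upwards [hle (eventually_affine_ne_zero hA.ne' a)] with u hu
    rw [← add_assoc, Gamma_add_one _ hu, mul_div_cancel_left₀ _ hu]
  have hgrowth : (fun u => gammaGrowth A (a + 1) u / ‖u‖) =ᶠ[halfPlaneAtInfty 0]
      gammaGrowth A a := by
    filter_upwards [hle (eventually_ne_cobounded 0)] with u hu
    rw [gammaGrowth_add_one A a hu, mul_div_cancel_right₀ _ (norm_ne_zero_iff.2 hu)]
  exact hGamma.trans_isTheta ((h.div hlinear).trans_eventuallyEq hgrowth)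

lemma isTheta_Gamma_affine {A : ℝ} (hA : 0 < A) (a : ℂ) :
    (fun u : ℂ => Gamma (A * u + a)) =Θ[halfPlaneAtInfty 0] gammaGrowth A a := by
  obtain ⟨n, hn⟩ := exists_nat_ge (-a.re)
  induction n generalizing a with
  | zero => exact isTheta_Gamma_affine_of_re_nonneg hA (by simpa using hn)
  | succ n ih =>
    refine isTheta_Gamma_affine_of_add_one hA (ih (a + 1) ?_)
    rw [add_re, one_re]
    push_cast at hn
    linarith

section GammaQuotient

variable {ι κ : Type*} [Fintype ι] [Fintype κ]

/-- The factor of the integrand of the inverse Mellin transform that does not depend on `x`: a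
quotient of products of Gamma functions of real-linear arguments. -/
noncomputable def gammaQuotient (A : ι → ℝ) (a : ι → ℂ) (B : κ → ℝ) (b : κ → ℂ) (s : ℂ) : ℂ :=
  (∏ k, Gamma (A k * s + a k)) / ∏ j, Gamma (B j * s + b j)

lemma prod_gammaGrowth {A : ι → ℝ} (hA : ∀ k, 0 < A k) (a : ι → ℂ) {u : ℂ} (hu : u ≠ 0) :
    ∏ k, gammaGrowth (A k) (a k) u =
      Real.exp ((∑ k, A k) * (u * log u - u).re) * (∏ k, A k ^ A k) ^ u.re *
        ‖u‖ ^ ((∑ k, a k).re - Fintype.card ι / 2) := by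
  simp only [gammaGrowth, Finset.prod_mul_distrib]
  rw [← Real.exp_sum, ← Finset.sum_mul,
    Real.finsetProd_rpow _ _ fun k _ => (Real.rpow_pos_of_pos (hA k) _).le,
    ← Real.rpow_sum_of_pos (norm_pos_iff.2 hu), Finset.sum_sub_distrib, re_sum]
  simp [div_eq_mul_inv]

lemma prod_rpow_self_pos {A : ι → ℝ} (hA : ∀ k, 0 < A k) : 0 < ∏ k, A k ^ A k :=
  Finset.prod_pos fun k _ => Real.rpow_pos_of_pos (hA k) _

lemma isTheta_gammaQuotient_zero {A : ι → ℝ} {B : κ → ℝ} (a : ι → ℂ) (b : κ → ℂ)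
    (hA : ∀ k, 0 < A k) (hB : ∀ j, 0 < B j) (hsum : ∑ k, A k = ∑ j, B j) :
    gammaQuotient A a B b =Θ[halfPlaneAtInfty 0] fun u =>
      ((∏ k, A k ^ A k) / ∏ j, B j ^ B j) ^ u.re *
        ‖u‖ ^ ((∑ k, a k - ∑ j, b j).re - (Fintype.card ι - Fintype.card κ) / 2) := by
  have hnum : (fun u => ∏ k, Gamma (A k * u + a k)) =Θ[halfPlaneAtInfty 0]
      fun u => ∏ k, gammaGrowth (A k) (a k) u :=
    .finsetProd fun k _ => isTheta_Gamma_affine (hA k) (a k)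
  have hden : (fun u => ∏ j, Gamma (B j * u + b j)) =Θ[halfPlaneAtInfty 0]
      fun u => ∏ j, gammaGrowth (B j) (b j) u :=
    .finsetProd fun j _ => isTheta_Gamma_affine (hB j) (b j)
  refine (hnum.div hden).trans_eventuallyEq ?_
  filter_upwards [halfPlaneAtInfty_le_cobounded 0 (eventually_ne_cobounded 0)] with u hu
  rw [prod_gammaGrowth hA a hu, prod_gammaGrowth hB b hu, hsum, mul_assoc, mul_assoc,
    mul_div_mul_left _ _ (Real.exp_ne_zero _), mul_div_mul_comm,
    ← Real.div_rpow (prod_rpow_self_pos hA).le (prod_rpow_self_pos hB).le,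
    ← Real.rpow_sub (norm_pos_iff.2 hu), sub_re]
  ring_nf

lemma gammaQuotient_add_const (A : ι → ℝ) (a : ι → ℂ) (B : κ → ℝ) (b : κ → ℂ) (s w : ℂ) :
    gammaQuotient A a B b (s + w) =
      gammaQuotient A (fun k => A k * w + a k) B (fun j => B j * w + b j) s := by
  simp only [gammaQuotient, mul_add, add_assoc]

lemma isTheta_gammaQuotient {A : ι → ℝ} {B : κ → ℝ} (a : ι → ℂ) (b : κ → ℂ)
    (hA : ∀ k, 0 < A k) (hB : ∀ j, 0 < B j) (hsum : ∑ k, A k = ∑ j, B j) (c : ℝ) :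
    gammaQuotient A a B b =Θ[halfPlaneAtInfty c] fun s =>
      ((∏ k, A k ^ A k) / ∏ j, B j ^ B j) ^ (s - c).re *
        ‖s - c‖ ^ ((∑ k, a k - ∑ j, b j).re - (Fintype.card ι - Fintype.card κ) / 2) := by
  have hshift : Tendsto (fun s : ℂ => s - c) (halfPlaneAtInfty c) (halfPlaneAtInfty 0) := by
    simpa [sub_eq_add_neg] using
      tendsto_affine_halfPlaneAtInfty (τ := 0) (a := -c) one_pos (by simp)
  have hμ : ∑ k, (A k * c + a k) - ∑ j, (B j * c + b j) = ∑ k, a k - ∑ j, b j := by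
    have hsum' := congrArg ofReal hsum
    push_cast at hsum'
    rw [Finset.sum_add_distrib, Finset.sum_add_distrib, ← Finset.sum_mul, ← Finset.sum_mul, hsum']
    ring
  have hzero := isTheta_gammaQuotient_zero (fun k => A k * c + a k) (fun j => B j * c + b j)
    hA hB hsum
  rw [hμ] at hzero
  have hcomp := And.intro (hzero.1.comp_tendsto hshift) (hzero.2.comp_tendsto hshift)
  refine EventuallyEq.trans_isTheta (.of_forall fun s => ?_) hcomp
  rw [Function.comp_apply, ← gammaQuotient_add_const, sub_add_cancel]

lemma isLittleO_gammaQuotient {A : ι → ℝ} {B : κ → ℝ} {a : ι → ℂ} {b : κ → ℂ}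
    (hA : ∀ k, 0 < A k) (hB : ∀ j, 0 < B j) (hsum : ∑ k, A k = ∑ j, B j)
    (hμ : 0 < (∑ j, b j - ∑ k, a k).re + (Fintype.card ι - Fintype.card κ) / 2) (c : ℝ) :
    gammaQuotient A a B b =o[halfPlaneAtInfty c] fun s =>
      ((∏ k, A k ^ A k) / ∏ j, B j ^ B j) ^ s.re := by
  set ρ := (∏ k, A k ^ A k) / ∏ j, B j ^ B j
  have hρ : 0 < ρ := div_pos (prod_rpow_self_pos hA) (prod_rpow_self_pos hB)
  set μ := (∑ j, b j - ∑ k, a k).re + (Fintype.card ι - Fintype.card κ) / 2 with hμ_def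
  have hdecay : Tendsto (fun s : ℂ => ρ ^ (-c) * ‖s - c‖ ^ (-μ)) (halfPlaneAtInfty c) (𝓝 0) := by
    have hnorm : Tendsto (fun s : ℂ => ‖s - c‖) (halfPlaneAtInfty c) atTop :=
      (tendsto_norm_cobounded_atTop.comp (tendsto_sub_const_cobounded _)).mono_left
        (halfPlaneAtInfty_le_cobounded c)
    simpa using ((tendsto_rpow_neg_atTop hμ).comp hnorm).const_mul (ρ ^ (-c))
  have hgrowth (s : ℂ) : ρ ^ s.re * (ρ ^ (-c) * ‖s - c‖ ^ (-μ)) = ρ ^ (s - c).re *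
      ‖s - c‖ ^ ((∑ k, a k - ∑ j, b j).re - (Fintype.card ι - Fintype.card κ) / 2) := by
    rw [← mul_assoc, ← Real.rpow_add hρ, hμ_def, sub_re, sub_re, sub_re, ofReal_re]
    ring_nf
  refine (isTheta_gammaQuotient a b hA hB hsum c).trans_isLittleO ?_
  exact ((isBigO_refl (fun s : ℂ => ρ ^ s.re) _).mul_isLittleO
    ((isLittleO_one_iff ℝ).2 hdecay)).congr hgrowth fun _ => mul_one _

lemma differentiableAt_gammaQuotient {A : ι → ℝ} {a : ι → ℂ} (B : κ → ℝ) (b : κ → ℂ) {s : ℂ}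
    (hs : ∀ k, 0 < (A k * s + a k).re) : DifferentiableAt ℂ (gammaQuotient A a B b) s := by
  have hnum (k : ι) : DifferentiableAt ℂ (fun s : ℂ => Gamma (A k * s + a k)) s := by
    refine (differentiableAt_Gamma _ fun m hm => ?_).comp s
      (f := fun s : ℂ => A k * s + a k) (by fun_prop)
    have := hs k
    rw [hm, neg_re, natCast_re] at this
    linarith [m.cast_nonneg (α := ℝ)]
  have hden (j : κ) : DifferentiableAt ℂ (fun s : ℂ => (Gamma (B j * s + b j))⁻¹) s :=
    (differentiable_one_div_Gamma _).comp s (f := fun s : ℂ => B j * s + b j) (by fun_prop)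
  unfold gammaQuotient
  simp only [div_eq_mul_inv, ← Finset.prod_inv_distrib]
  exact (DifferentiableAt.fun_finsetProd fun k _ => hnum k).mul
    (DifferentiableAt.fun_finsetProd fun j _ => hden j)

lemma differentiableOn_gammaQuotient_mul_cpow {A : ι → ℝ} {a : ι → ℂ} (hA : ∀ k, 0 < A k)
    (B : κ → ℝ) (b : κ → ℂ) {c x : ℝ} (hc : ∀ k, 0 < A k * c + (a k).re) (hx : 0 < x) :
    DifferentiableOn ℂ (fun s => gammaQuotient A a B b s * (x : ℂ) ^ (-s)) {s | c ≤ s.re} := by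
  intro s (hs : c ≤ s.re)
  have hre (k : ι) : 0 < (A k * s + a k).re := by
    rw [add_re, re_ofReal_mul]
    linarith [hc k, mul_le_mul_of_nonneg_left hs (hA k).le]
  exact ((differentiableAt_gammaQuotient B b hre).mul
    (differentiableAt_id.neg.const_cpow (.inl (ofReal_ne_zero.2 hx.ne')))).differentiableWithinAt

lemma isLittleO_gammaQuotient_mul_cpow {A : ι → ℝ} {B : κ → ℝ} {a : ι → ℂ} {b : κ → ℂ}
    (hA : ∀ k, 0 < A k) (hB : ∀ j, 0 < B j) (hsum : ∑ k, A k = ∑ j, B j)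
    (hμ : 0 < (∑ j, b j - ∑ k, a k).re + (Fintype.card ι - Fintype.card κ) / 2) (c : ℝ)
    {x : ℝ} (hx : 0 < x) :
    (fun s => gammaQuotient A a B b s * (x : ℂ) ^ (-s)) =o[halfPlaneAtInfty c] fun s =>
      ((∏ k, A k ^ A k) / (∏ j, B j ^ B j) / x) ^ s.re := by
  have hcpow : (fun s : ℂ => (x : ℂ) ^ (-s)) =Θ[halfPlaneAtInfty c] fun s => x ^ (-s.re) :=
    .of_norm_eventuallyEq (.of_forall fun s => norm_cpow_eq_rpow_re_of_pos hx (-s))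
  refine ((isLittleO_gammaQuotient hA hB hsum hμ c).mul_isBigO hcpow.1).congr_right fun s => ?_
  rw [Real.div_rpow (div_pos (prod_rpow_self_pos hA) (prod_rpow_self_pos hB)).le hx.le,
    Real.rpow_neg hx.le, ← div_eq_mul_inv]

end GammaQuotient

/-! ### Vanishing of integrals over vertical lines -/

section RightHalfPlane

variable {E : Type*} [NormedAddCommGroup E] [NormedSpace ℂ E]

lemma integral_const_rpow {r : ℝ} (hr₀ : 0 < r) (hr₁ : r ≠ 1) (x y : ℝ) :
    ∫ σ in x..y, r ^ σ = (r ^ y - r ^ x) / Real.log r := by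
  have hlog : Real.log r ≠ 0 := Real.log_ne_zero_of_pos_of_ne_one hr₀ hr₁
  have hderiv (σ : ℝ) : HasDerivAt (fun σ => r ^ σ / Real.log r) (r ^ σ) σ := by
    simpa [hlog] using ((hasDerivAt_id σ).const_rpow hr₀).div_const (Real.log r)
  rw [intervalIntegral.integral_eq_sub_of_hasDerivAt (fun σ _ => hderiv σ)
    ((Real.continuous_const_rpow hr₀.ne').intervalIntegrable _ _), sub_div]

lemma norm_integral_le_of_le_const_rpow {f : ℝ → E} {r ε x y : ℝ} (hr₀ : 0 < r) (hr₁ : r < 1)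
    (hxy : x ≤ y) (hε : 0 ≤ ε) (hf : ∀ σ, x ≤ σ → ‖f σ‖ ≤ ε * r ^ σ) :
    ‖∫ σ in x..y, f σ‖ ≤ ε * (r ^ x / -Real.log r) := by
  have hlog : Real.log r < 0 := Real.log_neg hr₀ hr₁
  have hint : IntervalIntegrable (fun σ => ε * r ^ σ) volume x y :=
    ((Real.continuous_const_rpow hr₀.ne').const_mul ε).intervalIntegrable _ _
  calc ‖∫ σ in x..y, f σ‖ ≤ ∫ σ in x..y, ε * r ^ σ :=
        intervalIntegral.norm_integral_le_of_norm_le hxy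
          (.of_forall fun σ hσ => hf σ hσ.1.le) hint
    _ = ε * ((r ^ x - r ^ y) / -Real.log r) := by
        rw [intervalIntegral.integral_const_mul, integral_const_rpow hr₀ hr₁.ne, div_neg,
          ← neg_div, neg_sub]
    _ ≤ ε * (r ^ x / -Real.log r) := by
        gcongr
        · linarith
        · linarith [Real.rpow_pos_of_pos hr₀ y]

lemma tendsto_integral_vertical_segment_zero {F : ℂ → E} {r C T : ℝ} (hr₀ : 0 < r) (hr₁ : r < 1)
    (hF : ∀ s : ℂ, T ≤ s.re → ‖F s‖ ≤ C * r ^ s.re) (R : ℝ) :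
    Tendsto (fun X : ℝ => ∫ t in -R..R, F (X + t * I)) atTop (𝓝 0) := by
  have hlim : Tendsto (fun X : ℝ => C * r ^ X * |R - -R|) atTop (𝓝 0) := by
    simpa using ((tendsto_rpow_atTop_of_base_lt_one r (by linarith) hr₁).const_mul
      C).mul_const |R - -R|
  refine squeeze_zero_norm' ?_ hlim
  filter_upwards [eventually_ge_atTop T] with X hX
  refine intervalIntegral.norm_integral_le_of_norm_le_const fun t _ => ?_
  simpa using hF (X + t * I) (by simpa using hX)

lemma norm_integral_vertical_segment_le {F : ℂ → E} {c X : ℝ}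
    (hF : DifferentiableOn ℂ F {s | c ≤ s.re}) (hX : c ≤ X) (R : ℝ) :
    ‖∫ t in -R..R, F (c + t * I)‖ ≤ ‖∫ σ in c..X, F (σ + (-R : ℝ) * I)‖ +
      ‖∫ σ in c..X, F (σ + R * I)‖ + ‖∫ t in -R..R, F (X + t * I)‖ := by
  have hCauchy := integral_boundary_rect_eq_zero_of_differentiableOn F ⟨c, -R⟩ ⟨X, R⟩ <|
    hF.mono fun s hs => by
      rw [mem_reProdIm, Set.uIcc_of_le hX] at hs
      exact hs.1.1
  have hedges : I • ∫ t in -R..R, F (c + t * I) = (∫ σ in c..X, F (σ + (-R : ℝ) * I)) -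
      (∫ σ in c..X, F (σ + R * I)) + I • ∫ t in -R..R, F (X + t * I) :=
    (sub_eq_zero.1 hCauchy).symm
  have hI (v : E) : ‖I • v‖ = ‖v‖ := by rw [norm_smul, norm_I, one_mul]
  rw [← hI, hedges]
  exact norm_add_le_of_le (norm_sub_le _ _) (hI _).le

lemma norm_integral_vertical_line_le {F : ℂ → E} {c r ε T R : ℝ}
    (hF : DifferentiableOn ℂ F {s | c ≤ s.re}) (hr₀ : 0 < r) (hr₁ : r < 1) (hε : 0 ≤ ε)
    (hbound : ∀ s : ℂ, c ≤ s.re → T ≤ ‖s‖ → ‖F s‖ ≤ ε * r ^ s.re) (hR : T ≤ |R|) :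
    ‖∫ t in -R..R, F (c + t * I)‖ ≤ 2 * (ε * (r ^ c / -Real.log r)) := by
  have hhorizontal {X y : ℝ} (hX : c ≤ X) (hy : T ≤ |y|) :
      ‖∫ σ in c..X, F (σ + y * I)‖ ≤ ε * (r ^ c / -Real.log r) :=
    norm_integral_le_of_le_const_rpow hr₀ hr₁ hX hε fun σ hσ => by
      simpa using hbound (σ + y * I) (by simpa using hσ)
        (hy.trans (by simpa using abs_im_le_norm (σ + y * I)))
  have hvertical : Tendsto (fun X : ℝ => 2 * (ε * (r ^ c / -Real.log r)) +
      ‖∫ t in -R..R, F (X + t * I)‖) atTop (𝓝 (2 * (ε * (r ^ c / -Real.log r)))) := by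
    simpa using (tendsto_integral_vertical_segment_zero (T := max c T) hr₀ hr₁
      (fun s hs => hbound s (le_of_max_le_left hs)
        ((le_of_max_le_right hs).trans (re_le_norm s))) R).norm.const_add _
  refine ge_of_tendsto hvertical ?_
  filter_upwards [eventually_ge_atTop c] with X hX
  have hbottom := hhorizontal hX (y := -R) (by rwa [abs_neg])
  have htop := hhorizontal hX (y := R) hR
  linarith [norm_integral_vertical_segment_le hF hX R]

lemma tendsto_integral_vertical_line_zero {F : ℂ → E} {c r : ℝ}
    (hF : DifferentiableOn ℂ F {s | c ≤ s.re}) (hr₀ : 0 < r) (hr₁ : r < 1)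
    (hdecay : F =o[halfPlaneAtInfty c] fun s => r ^ s.re) :
    Tendsto (fun R : ℝ => ∫ t in -R..R, F (c + t * I)) atTop (𝓝 0) := by
  set K := r ^ c / -Real.log r
  have hK : 0 < K := div_pos (Real.rpow_pos_of_pos hr₀ c) (neg_pos.2 (Real.log_neg hr₀ hr₁))
  rw [← isLittleO_one_iff ℝ, isLittleO_iff]
  intro δ hδ
  have hε : 0 < δ / (2 * K) := by positivity
  obtain ⟨T, hT⟩ := eventually_halfPlaneAtInfty_iff.1 (hdecay.def hε)
  filter_upwards [eventually_ge_atTop T] with R hR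
  have hbound (s : ℂ) (hs : c ≤ s.re) (hTs : T ≤ ‖s‖) : ‖F s‖ ≤ δ / (2 * K) * r ^ s.re := by
    simpa only [Real.norm_of_nonneg (Real.rpow_pos_of_pos hr₀ _).le] using hT s hs hTs
  calc ‖∫ t in -R..R, F (c + t * I)‖ ≤ 2 * (δ / (2 * K) * K) :=
        norm_integral_vertical_line_le hF hr₀ hr₁ hε.le hbound (hR.trans (le_abs_self R))
    _ = δ * ‖(1 : ℝ)‖ := by
        rw [norm_one]
        field_simp

end RightHalfPlane

lemma mul_add_pos_of_neg_iInf_div_lt {ι : Type*} [Finite ι] {A a : ι → ℝ} (hA : ∀ k, 0 < A k)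
    {c : ℝ} (hc : -(⨅ k, a k / A k) < c) (k : ι) : 0 < A k * c + a k := by
  have hinf : ⨅ k, a k / A k ≤ a k / A k := ciInf_le (Set.finite_range _).bddBelow k
  have hratio : -c < a k / A k := by linarith
  rw [lt_div_iff₀ (hA k)] at hratio
  linarith

theorem stmt14_general {ι κ : Type*} [Fintype ι] [Fintype κ] (A : ι → ℝ) (B : κ → ℝ)
    (a : ι → ℂ) (b : κ → ℂ) (hA : ∀ k, 0 < A k) (hB : ∀ j, 0 < B j)
    (hsum : ∑ i, A i = ∑ j, B j)
    (hμ : 0 < (∑ j, b j - ∑ k, a k).re + ((Fintype.card ι : ℝ) - Fintype.card κ) / 2)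
    (ρ : ℝ) (hρ : ρ = (∏ k, A k ^ A k) * ∏ j, B j ^ (-B j))
    (c : ℝ) (hc : ∀ k, 0 < A k * c + (a k).re) (x : ℝ) (hx : ρ < x) :
    Tendsto (fun R : ℝ => (((2 * Real.pi)⁻¹ : ℝ) : ℂ) *
      ∫ t in -R..R,
        (∏ k, Gamma (A k * (c + t * I) + a k)) / (∏ j, Gamma (B j * (c + t * I) + b j)) *
          (x : ℂ) ^ (-((c : ℂ) + t * I)))
      atTop (𝓝 0) := by
  have hρ' : ρ = (∏ k, A k ^ A k) / ∏ j, B j ^ B j := by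
    simp only [hρ, Real.rpow_neg (hB _).le, Finset.prod_inv_distrib, div_eq_mul_inv]
  have hρ₀ : 0 < ρ := hρ' ▸ div_pos (prod_rpow_self_pos hA) (prod_rpow_self_pos hB)
  have hx₀ : 0 < x := hρ₀.trans hx
  have hdiff := differentiableOn_gammaQuotient_mul_cpow hA B b hc hx₀
  have hdecay := isLittleO_gammaQuotient_mul_cpow hA hB hsum hμ c hx₀
  rw [← hρ'] at hdecay
  simpa only [gammaQuotient, mul_zero] using (tendsto_integral_vertical_line_zero hdiff
    (div_pos hρ₀ hx₀) ((div_lt_one hx₀).2 hx) hdecay).const_mul (((2 * Real.pi)⁻¹ : ℝ) : ℂ)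

end

theorem stmt14 (p q : ℕ) (hp : 1 ≤ p) (hq : 1 ≤ q)
    (A : Fin p → ℝ) (B : Fin q → ℝ) (a : Fin p → ℝ) (b : Fin q → ℝ)
    (hA : ∀ k, 0 < A k) (hB : ∀ j, 0 < B j)
    (hsum : ∑ i, A i = ∑ j, B j)
    (hμ : 0 < (∑ j, b j) - (∑ k, a k) + ((p : ℝ) - (q : ℝ)) / 2)
    (ρ : ℝ) (hρ : ρ = (∏ k, A k ^ A k) * ∏ j, B j ^ (-B j))
    (c : ℝ) (hc : -(⨅ k, a k / A k) < c)
    (x : ℝ) (hx : ρ < x) :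
    Tendsto (fun R : ℝ => (((2 * Real.pi)⁻¹ : ℝ) : ℂ) *
      ∫ t in -R..R,
        (∏ k, Complex.Gamma ((A k : ℂ) * ((c : ℂ) + (t : ℂ) * Complex.I) + (a k : ℂ))) /
          (∏ j, Complex.Gamma ((B j : ℂ) * ((c : ℂ) + (t : ℂ) * Complex.I) + (b j : ℂ))) *
          (x : ℂ) ^ (-((c : ℂ) + (t : ℂ) * Complex.I)))
      atTop (nhds 0) :=
  stmt14_general A B (fun k => a k) (fun j => b j) hA hB hsum (by simpa using hμ) ρ hρ c
    (mul_add_pos_of_neg_iInf_div_lt hA hc) x hx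
end
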